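/- arXiv:0807.3250 — 2 statements merged into one kernel-verified Lean document; each statement's English description precedes it below -/
import Mathlib

section
/- Let 𝕜 be a field and let A and B be finite-dimensional 𝕜-algebras such that every simple A-module and every simple B-module is absolutely irreducible over 𝕜 (i.e., its endomorphism algebra equals 𝕜). Then there is an isomorphism of abelian groups K₀(A) ⊗_ℤ K₀(B) ≅ K₀(A ⊗_𝕜 B) which sends [P] ⊗ [Q] to [P ⊗_𝕜 Q] for every finitely generated projective A-module P and finitely generated projective B-module Q. -/
/-!
`K₀` of a ring: the Grothendieck group of finitely generated projective modules,
and the Künneth-type isomorphism `K₀(A) ⊗_ℤ K₀(B) ≅ K₀(A ⊗_𝕜 B)` for finite-dimensional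
algebras over a field all of whose simple modules are absolutely irreducible.
-/

open TensorProduct

noncomputable section

/-- A bundled finitely generated projective (left) module over a ring `A`. -/
structure FGProj (A : Type) [Ring A] : Type 1 where
  M : Type
  [acg : AddCommGroup M]
  [mod : Module A M]
  fin : Module.Finite A M
  proj : Module.Projective A M

attribute [instance] FGProj.acg FGProj.mod

/-- Isomorphism of finitely generated projective modules. -/
def FGProjIso (A : Type) [Ring A] (P Q : FGProj A) : Prop :=
  Nonempty (P.M ≃ₗ[A] Q.M)

/-- `K₀(A)`: the free abelian group on isomorphism classes of finitely generated
projective `A`-modules, modulo the relations `[R] = [P] + [Q]` whenever `R ≅ P ⊕ Q`. -/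
def K0 (A : Type) [Ring A] : Type 1 :=
  FreeAbelianGroup (Quot (FGProjIso A)) ⧸
    AddSubgroup.closure {z | ∃ P Q R : FGProj A, Nonempty (R.M ≃ₗ[A] P.M × Q.M) ∧
      z = FreeAbelianGroup.of (Quot.mk (FGProjIso A) R) -
        FreeAbelianGroup.of (Quot.mk (FGProjIso A) P) -
        FreeAbelianGroup.of (Quot.mk (FGProjIso A) Q)}

instance (A : Type) [Ring A] : AddCommGroup (K0 A) :=
  QuotientAddGroup.Quotient.addCommGroup _

/-- The class `[P] ∈ K₀(A)` of a finitely generated projective `A`-module `P`. -/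
def K0cls {A : Type} [Ring A] (P : FGProj A) : K0 A :=
  QuotientAddGroup.mk (FreeAbelianGroup.of (Quot.mk (FGProjIso A) P))

open Module

set_option linter.style.haveILetI false
set_option linter.unusedSectionVars false

section K0general

variable {A : Type} [Ring A]

theorem K0cls_iso {P Q : FGProj A} (e : P.M ≃ₗ[A] Q.M) : K0cls P = K0cls Q := by
  have : Quot.mk (FGProjIso A) P = Quot.mk (FGProjIso A) Q := Quot.sound ⟨e⟩
  unfold K0cls
  rw [this]

theorem K0cls_add {P Q R : FGProj A} (e : R.M ≃ₗ[A] P.M × Q.M) :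
    K0cls R = K0cls P + K0cls Q := by
  have h : (FreeAbelianGroup.of (Quot.mk (FGProjIso A) R) -
        FreeAbelianGroup.of (Quot.mk (FGProjIso A) P) -
        FreeAbelianGroup.of (Quot.mk (FGProjIso A) Q)) ∈
      AddSubgroup.closure {z | ∃ P Q R : FGProj A, Nonempty (R.M ≃ₗ[A] P.M × Q.M) ∧
      z = FreeAbelianGroup.of (Quot.mk (FGProjIso A) R) -
        FreeAbelianGroup.of (Quot.mk (FGProjIso A) P) -
        FreeAbelianGroup.of (Quot.mk (FGProjIso A) Q)} :=
    AddSubgroup.subset_closure ⟨P, Q, R, ⟨e⟩, rfl⟩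
  have h2 := (QuotientAddGroup.eq_zero_iff _).2 h
  rw [sub_sub] at h2
  exact sub_eq_zero.1 h2

/-- The zero module. -/
def FGProj.zero (A : Type) [Ring A] : FGProj A where
  M := PUnit
  fin := inferInstance
  proj := inferInstance

theorem FGProj.d_iso {G : Type*} [AddCommGroup G] {d : FGProj A → G}
    (hd : ∀ P Q R : FGProj A, Nonempty (R.M ≃ₗ[A] P.M × Q.M) → d R = d P + d Q)
    {P Q : FGProj A} (e : P.M ≃ₗ[A] Q.M) : d P = d Q := by
  have h0 : d (FGProj.zero A) = d (FGProj.zero A) + d (FGProj.zero A) :=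
    hd _ _ _ ⟨LinearEquiv.ofLinearMap 0 0 (LinearMap.ext fun _ => rfl) (LinearMap.ext fun _ => rfl)⟩
  have h1 : d P = d Q + d (FGProj.zero A) := by
    refine hd _ _ _ ⟨LinearEquiv.ofLinear
      (LinearMap.prod e.toLinearMap 0) (e.symm.toLinearMap ∘ₗ LinearMap.fst _ _ _) ?_ ?_⟩
    · ext x
      · simp
      · rfl
      · simp
      · rfl
    · ext x; simp
  have : d (FGProj.zero A) = 0 := by simpa using h0
  rw [h1, this, add_zero]

/-- Universal property of `K0`. -/
def K0lift {G : Type*} [AddCommGroup G] (d : FGProj A → G)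
    (hd : ∀ P Q R : FGProj A, Nonempty (R.M ≃ₗ[A] P.M × Q.M) → d R = d P + d Q) :
    K0 A →+ G :=
  QuotientAddGroup.lift _
    (FreeAbelianGroup.lift (Quot.lift d fun _ _ ⟨e⟩ => FGProj.d_iso hd e)) (by
      rw [AddSubgroup.closure_le]
      rintro _ ⟨P, Q, R, e, rfl⟩
      simp [hd P Q R e])

theorem K0lift_cls {G : Type*} [AddCommGroup G] (d : FGProj A → G)
    (hd : ∀ P Q R : FGProj A, Nonempty (R.M ≃ₗ[A] P.M × Q.M) → d R = d P + d Q)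
    (P : FGProj A) : K0lift d hd (K0cls P) = d P := by
  unfold K0lift K0cls
  refine (QuotientAddGroup.lift_mk _ _ _).trans ?_
  simp

theorem K0_induction {p : K0 A → Prop} (h1 : ∀ P, p (K0cls P))
    (hneg : ∀ x, p x → p (-x)) (h0 : p 0)
    (hadd : ∀ x y, p x → p y → p (x + y)) (x : K0 A) : p x := by
  obtain ⟨y, rfl⟩ := QuotientAddGroup.mk_surjective x
  induction y using FreeAbelianGroup.induction_on with
  | zero => exact h0
  | of z => obtain ⟨P, rfl⟩ := Quot.exists_rep z; exact h1 P
  | neg z hz => exact hneg _ hz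
  | add y z hy hz => exact hadd _ _ hy hz

end K0general

section kmod

variable (𝕜 : Type) {A : Type} [Field 𝕜] [Ring A] [Algebra 𝕜 A]

/-- The underlying vector space. -/
@[reducible] def FGProj.kmod (P : FGProj A) : Module 𝕜 P.M := Module.compHom P.M (algebraMap 𝕜 A)

theorem tower_compHom (M : Type) [AddCommGroup M] [Module A M] :
    letI : Module 𝕜 M := Module.compHom M (algebraMap 𝕜 A)
    IsScalarTower 𝕜 A M := by
  letI : Module 𝕜 M := Module.compHom M (algebraMap 𝕜 A)
  refine ⟨fun c a m => ?_⟩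
  rw [Algebra.smul_def, mul_smul]
  rfl

theorem FGProj.ktower (P : FGProj A) :
    letI := P.kmod 𝕜
    IsScalarTower 𝕜 A P.M := tower_compHom 𝕜 P.M

/-- dimension -/
def FGProj.dim (P : FGProj A) : ℕ :=
  letI := P.kmod 𝕜
  Module.finrank 𝕜 P.M

theorem FGProj.dim_eq (P : FGProj A) [Module 𝕜 P.M] [IsScalarTower 𝕜 A P.M] :
    P.dim 𝕜 = Module.finrank 𝕜 P.M := by
  have : (P.kmod 𝕜) = ‹Module 𝕜 P.M› := by
    apply Module.ext
    ext c m
    change algebraMap 𝕜 A c • m = _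
    rw [algebraMap_smul]
    rfl
  rw [FGProj.dim, this]

end kmod

section Cover

variable {𝕜 R : Type} [Field 𝕜] [Ring R] [Algebra 𝕜 R] [FiniteDimensional 𝕜 R]

theorem finHom (P S : Type) [AddCommGroup P] [Module R P] [AddCommGroup S] [Module R S]
    [Module 𝕜 S] [IsScalarTower 𝕜 R S] [Module.Finite R P] [Module.Finite 𝕜 S] :
    Module.Finite 𝕜 (P →ₗ[R] S) := by
  obtain ⟨n, g, hg⟩ := Module.Finite.exists_fin' R P
  refine Module.Finite.of_injective
    (({ toFun := fun f i => f (g (Pi.single i 1)), map_add' := fun _ _ => rfl,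
        map_smul' := fun _ _ => rfl } : (P →ₗ[R] S) →ₗ[𝕜] (Fin n → S))) ?_
  intro f f' h
  have : f ∘ₗ g = f' ∘ₗ g := by
    refine LinearMap.pi_ext' fun i => LinearMap.ext_ring ?_
    exact congrFun h i
  ext x
  obtain ⟨y, rfl⟩ := hg x
  exact LinearMap.congr_fun this y

theorem iso_of_surj {Q P : Type} [AddCommGroup Q] [Module R Q] [AddCommGroup P] [Module R P]
    [Module.Projective R P] (g : Q →ₗ[R] P) (hg : Function.Surjective g) :
    Nonempty (Q ≃ₗ[R] LinearMap.ker g × P) := by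
  obtain ⟨l, hl⟩ := Module.projective_lifting_property g LinearMap.id hg
  have hex : Function.Exact (LinearMap.ker g).subtype g := LinearMap.exact_subtype_ker_map g
  exact ⟨(hex.splitSurjectiveEquiv (Submodule.subtype_injective _) ⟨l, hl⟩).1⟩

variable (𝕜) in
theorem span_cover {ι : Type} (P : ι → FGProj R) (S : ι → Type) [∀ i, AddCommGroup (S i)]
    [∀ i, Module R (S i)] (π : ∀ i, (P i).M →ₗ[R] S i)
    (hπ : ∀ i, Function.Surjective (π i))
    (hS : ∀ (M : Type) [AddCommGroup M] [Module R M], IsSimpleModule R M →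
      ∃ i, Nonempty (M ≃ₗ[R] S i))
    (hc : ∀ i (N : Submodule R (P i).M), IsCoatom N → N = LinearMap.ker (π i)) :
    ∀ (n : ℕ) (Q : FGProj R), Q.dim 𝕜 = n →
      K0cls Q ∈ Submodule.span ℤ (Set.range fun i => K0cls (P i)) := by
  intro n
  induction n using Nat.strong_induction_on with
  | _ n ih =>
  intro Q hQ
  letI := Q.kmod 𝕜
  haveI := Q.ktower 𝕜
  haveI := Q.fin
  haveI := Q.proj
  rcases subsingleton_or_nontrivial Q.M with hs | hs
  · have : K0cls Q = K0cls Q + K0cls Q := K0cls_add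
      ({ toFun := fun x => (x, x), invFun := fun x => x.1,
         map_add' := fun _ _ => rfl, map_smul' := fun _ _ => rfl,
         left_inv := fun _ => rfl, right_inv := fun _ => Subsingleton.elim _ _ })
    have h0 : K0cls Q = 0 := by simpa using this
    rw [h0]; exact Submodule.zero_mem _
  · obtain ⟨m, hm, -⟩ := (eq_top_or_exists_le_coatom (⊥ : Submodule R Q.M)).resolve_left bot_ne_top
    have hms : IsSimpleModule R (Q.M ⧸ m) := isSimpleModule_iff_isCoatom.2 hm
    obtain ⟨i, ⟨e⟩⟩ := hS _ hms
    haveI := (P i).fin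
    haveI := (P i).proj
    obtain ⟨g, hg⟩ := Module.projective_lifting_property (π i) (e.toLinearMap ∘ₗ m.mkQ) (hπ i)
    have hρ : Function.Surjective (e.toLinearMap ∘ₗ m.mkQ) := by
      simpa using e.surjective.comp m.mkQ_surjective
    have hS0 : IsSimpleModule R (S i) := (LinearEquiv.isSimpleModule_iff e).1 hms
    haveI := IsSimpleModule.nontrivial R (S i)
    have hgs : Function.Surjective g := by
      rw [← LinearMap.range_eq_top]
      by_contra hne
      obtain ⟨N, hN, hle⟩ := (eq_top_or_exists_le_coatom (LinearMap.range g)).resolve_left hne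
      rw [hc i N hN] at hle
      obtain ⟨s, hs⟩ := exists_ne (0 : S i)
      obtain ⟨x, hx⟩ := hρ s
      apply hs
      rw [← hx, ← hg]
      exact hle ⟨x, rfl⟩
    obtain ⟨u⟩ := iso_of_surj g hgs
    haveI : Module.Finite 𝕜 Q.M := Module.Finite.trans R Q.M
    haveI : IsNoetherianRing R := isNoetherian_of_tower 𝕜 inferInstance
    have hpr : Module.Projective R (LinearMap.ker g) :=
      Module.Projective.of_split (u.symm.toLinearMap ∘ₗ LinearMap.inl R _ _)
        (LinearMap.fst R _ _ ∘ₗ u.toLinearMap) (by ext; simp)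
    let K : FGProj R := ⟨LinearMap.ker g, inferInstance, hpr⟩
    rw [K0cls_add (P := K) (Q := P i) u]
    refine Submodule.add_mem _ (ih (K.dim 𝕜) ?_ K rfl) (Submodule.subset_span ⟨i, rfl⟩)
    rw [← hQ]
    haveI : IsScalarTower 𝕜 R K.M := inferInstanceAs (IsScalarTower 𝕜 R (LinearMap.ker g))
    rw [K.dim_eq 𝕜, Q.dim_eq 𝕜]
    change Module.finrank 𝕜 ((LinearMap.ker g).restrictScalars 𝕜) < _
    apply Submodule.finrank_lt
    intro htop
    have hz : ∀ x, g x = 0 := fun x => by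
      have : x ∈ (LinearMap.ker g).restrictScalars 𝕜 := by rw [htop]; trivial
      exact this
    obtain ⟨s, hs⟩ := exists_ne (0 : S i)
    obtain ⟨x, hx⟩ := hρ s
    apply hs
    rw [← hx, ← hg]
    simp [hz]

/-- The functional `dim Hom(-, S)`. -/
def homDim (𝕜 : Type) {R : Type} [Field 𝕜] [Ring R] [Algebra 𝕜 R]
    [FiniteDimensional 𝕜 R] (S : Type) [AddCommGroup S] [Module R S]
    [Module 𝕜 S] [IsScalarTower 𝕜 R S] [Module.Finite 𝕜 S] : K0 R →+ ℤ :=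
  K0lift (fun P => (Module.finrank 𝕜 (P.M →ₗ[R] S) : ℤ)) (by
    rintro P Q R' ⟨e⟩
    haveI := P.fin
    haveI := Q.fin
    haveI := finHom (𝕜 := 𝕜) (R := R) P.M S
    haveI := finHom (𝕜 := 𝕜) (R := R) Q.M S
    let f : (R'.M →ₗ[R] S) ≃ₗ[𝕜] (P.M →ₗ[R] S) × (Q.M →ₗ[R] S) :=
      { toFun := fun f => (f ∘ₗ e.symm.toLinearMap ∘ₗ LinearMap.inl R _ _,
            f ∘ₗ e.symm.toLinearMap ∘ₗ LinearMap.inr R _ _)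
        invFun := fun f => (LinearMap.coprod f.1 f.2) ∘ₗ e.toLinearMap
        map_add' := fun _ _ => rfl
        map_smul' := fun _ _ => rfl
        left_inv := fun f => by
          ext x
          simp only [LinearMap.comp_apply, LinearMap.coprod_apply, ← map_add]
          simp
        right_inv := fun f => by ext <;> simp }
    rw [f.finrank_eq, Module.finrank_prod]
    push_cast; rfl)

variable (𝕜) in
theorem basis_cover {ι : Type} (P : ι → FGProj R) (S : ι → Type) [∀ i, AddCommGroup (S i)]
    [∀ i, Module R (S i)] [∀ i, Module 𝕜 (S i)] [∀ i, IsScalarTower 𝕜 R (S i)]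
    [∀ i, IsSimpleModule R (S i)]
    (π : ∀ i, (P i).M →ₗ[R] S i)
    (hπ : ∀ i, Function.Surjective (π i))
    (hS : ∀ (M : Type) [AddCommGroup M] [Module R M], IsSimpleModule R M →
      ∃ i, Nonempty (M ≃ₗ[R] S i))
    (hS' : ∀ i j, Nonempty (S i ≃ₗ[R] S j) → i = j)
    (hc : ∀ i (N : Submodule R (P i).M), IsCoatom N → N = LinearMap.ker (π i)) :
    ∃ b : Module.Basis ι ℤ (K0 R), ∀ i, b i = K0cls (P i) := by
  haveI : ∀ i, Module.Finite 𝕜 (S i) := fun i => Module.Finite.trans R (S i)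
  have hoff : ∀ i j, i ≠ j → homDim 𝕜 (S j) (K0cls (P i)) = 0 := by
    intro i j hij
    rw [homDim, K0lift_cls]
    have : Subsingleton ((P i).M →ₗ[R] S j) := by
      refine subsingleton_of_forall_eq 0 fun f => ?_
      by_contra hf
      have hfs := LinearMap.surjective_of_ne_zero hf
      have := hc i _ (LinearMap.isCoatom_ker_of_surjective hfs)
      exact hij (hS' i j ⟨((LinearMap.quotKerEquivOfSurjective _ (hπ i)).symm.trans
        (Submodule.quotEquivOfEq _ _ this.symm)).trans (LinearMap.quotKerEquivOfSurjective f hfs)⟩)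
    exact_mod_cast Module.finrank_zero_of_subsingleton
  have hon : ∀ i, homDim 𝕜 (S i) (K0cls (P i)) ≠ 0 := by
    intro i
    rw [homDim, K0lift_cls]
    haveI := (P i).fin
    haveI := finHom (𝕜 := 𝕜) (R := R) (P i).M (S i)
    haveI := IsSimpleModule.nontrivial R (S i)
    have : Nontrivial ((P i).M →ₗ[R] S i) := by
      refine ⟨π i, 0, fun h => ?_⟩
      obtain ⟨s, hs⟩ := exists_ne (0 : S i)
      obtain ⟨x, hx⟩ := hπ i s
      exact hs (by rw [← hx, h]; rfl)
    exact_mod_cast (Module.finrank_pos (R := 𝕜) (M := (P i).M →ₗ[R] S i)).ne'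
  have hli : LinearIndependent ℤ (fun i => K0cls (P i)) := by
    rw [linearIndependent_iff']
    intro s g hg i hi
    have h := congrArg (homDim 𝕜 (S i)) hg
    rw [map_sum, map_zero, Finset.sum_eq_single i] at h
    · rw [map_zsmul, smul_eq_mul] at h
      exact (mul_eq_zero.1 h).resolve_right (hon i)
    · intro j _ hji
      rw [map_zsmul, hoff j i hji, smul_zero]
    · intro h'; exact absurd hi h'
  refine ⟨Module.Basis.mk hli ?_, fun i => Module.Basis.mk_apply _ _ _⟩
  intro x _
  induction x using K0_induction with
  | h1 Q => exact span_cover 𝕜 P S π hπ hS hc _ Q rfl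
  | hneg x hx => exact Submodule.neg_mem _ (hx trivial)
  | h0 => exact Submodule.zero_mem _
  | hadd x y hx hy => exact Submodule.add_mem _ (hx trivial) (hy trivial)

theorem exists_cover (𝕜 : Type) {R : Type} [Field 𝕜] [Ring R] [Algebra 𝕜 R]
    [FiniteDimensional 𝕜 R] (S : Type) [AddCommGroup S] [Module R S] [IsSimpleModule R S] :
    ∃ (P : FGProj R) (π : P.M →ₗ[R] S), Function.Surjective π ∧
      ∀ N : Submodule R P.M, IsCoatom N → N = LinearMap.ker π := by
  haveI := IsSimpleModule.nontrivial R S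
  have hex : ∃ n, ∃ (P : FGProj R) (π : P.M →ₗ[R] S), Function.Surjective π ∧ P.dim 𝕜 = n := by
    obtain ⟨s, hs⟩ := exists_ne (0 : S)
    exact ⟨_, ⟨R, inferInstance, inferInstance⟩, LinearMap.toSpanSingleton R S s,
      IsSimpleModule.toSpanSingleton_surjective R hs, rfl⟩
  classical
  obtain ⟨P, π, hπ, hdim⟩ := Nat.find_spec hex
  have hmin : ∀ (Q : FGProj R) (ρ : Q.M →ₗ[R] S), Function.Surjective ρ → P.dim 𝕜 ≤ Q.dim 𝕜 := by
    intro Q ρ hρ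
    rw [hdim]
    exact Nat.find_min' hex ⟨Q, ρ, hρ, rfl⟩
  refine ⟨P, π, hπ, fun N hN => ?_⟩
  letI := P.kmod 𝕜
  haveI := P.ktower 𝕜
  haveI := P.fin
  haveI := P.proj
  haveI : Module.Finite 𝕜 P.M := Module.Finite.trans R P.M
  haveI : IsNoetherianRing R := isNoetherian_of_tower 𝕜 inferInstance
  haveI : IsArtinianRing R := isArtinian_of_tower 𝕜 inferInstance
  by_contra hne
  have hk := LinearMap.isCoatom_ker_of_surjective hπ
  have hsup : N ⊔ LinearMap.ker π = ⊤ := hN.codisjoint_of_ne hk hne |>.eq_top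
  have hNs : Function.Surjective (π ∘ₗ N.subtype) := by
    intro s
    obtain ⟨x, rfl⟩ := hπ s
    have hx : x ∈ N ⊔ LinearMap.ker π := by rw [hsup]; trivial
    obtain ⟨y, hy, z, hz, rfl⟩ := Submodule.mem_sup.1 hx
    exact ⟨⟨y, hy⟩, by simp [LinearMap.mem_ker.1 hz]⟩
  obtain ⟨f, hf⟩ := Module.projective_lifting_property (π ∘ₗ N.subtype) π hNs
  let g : Module.End R P.M := N.subtype ∘ₗ f
  have hg : ∀ x, π (g x) = π x := fun x => LinearMap.congr_fun hf x
  have hgn : ∀ (n : ℕ) x, π ((g ^ n) x) = π x := by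
    intro n
    induction n with
    | zero => intro x; simp
    | succ n ih => intro x; rw [pow_succ', Module.End.mul_apply, hg, ih]
  obtain ⟨n, hn1, hcn⟩ := ((Filter.eventually_ge_atTop 1).and
    (LinearMap.eventually_isCompl_ker_pow_range_pow g)).exists
  have hpr : Module.Projective R (LinearMap.range (g ^ n)) :=
    Module.Projective.of_split (Submodule.subtype _)
      (Submodule.projectionOnto _ _ hcn.symm) (by ext; simp)
  let Q : FGProj R := ⟨LinearMap.range (g ^ n), inferInstance, hpr⟩
  have h1 := hmin Q (π ∘ₗ Submodule.subtype _) (fun s => by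
    obtain ⟨x, rfl⟩ := hπ s
    exact ⟨⟨(g ^ n) x, ⟨x, rfl⟩⟩, hgn n x⟩)
  haveI : IsScalarTower 𝕜 R Q.M := inferInstanceAs (IsScalarTower 𝕜 R (LinearMap.range (g ^ n)))
  rw [P.dim_eq 𝕜, Q.dim_eq 𝕜] at h1
  have h2 : (LinearMap.range (g ^ n)).restrictScalars 𝕜 = ⊤ := by
    apply Submodule.eq_top_of_finrank_eq
    exact le_antisymm (Submodule.finrank_le _) h1
  apply hN.1
  rw [eq_top_iff]
  intro x _
  have hx : x ∈ (LinearMap.range (g ^ n)).restrictScalars 𝕜 := by rw [h2]; trivial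
  obtain ⟨y, rfl⟩ := hx
  obtain ⟨m, rfl⟩ : ∃ m, n = m + 1 := ⟨n - 1, by omega⟩
  rw [pow_succ', Module.End.mul_apply]
  exact (f _).2

/-- Isomorphism of simple quotients. -/
def simpSetoid (R : Type) [Ring R] : Setoid {m : Submodule R R // IsCoatom m} where
  r m n := Nonempty ((R ⧸ m.1) ≃ₗ[R] (R ⧸ n.1))
  iseqv := ⟨fun _ => ⟨LinearEquiv.refl _ _⟩, fun ⟨e⟩ => ⟨e.symm⟩, fun ⟨e⟩ ⟨f⟩ => ⟨e.trans f⟩⟩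

/-- Isomorphism classes of simple modules. -/
def Irr (R : Type) [Ring R] : Type := Quotient (simpSetoid R)

/-- Representative. -/
abbrev Irr.S {R : Type} [Ring R] (i : Irr R) : Type := R ⧸ (Quotient.out i).1

instance (i : Irr R) : IsSimpleModule R i.S :=
  isSimpleModule_iff_isCoatom.2 (Quotient.out i).2

theorem Irr.exists_iso (M : Type) [AddCommGroup M] [Module R M] (h : IsSimpleModule R M) :
    ∃ i : Irr R, Nonempty (M ≃ₗ[R] i.S) := by
  obtain ⟨m, hm, ⟨e⟩⟩ := isSimpleModule_iff_quot_maximal.1 h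
  let i : Irr R := Quotient.mk (simpSetoid R) ⟨m, hm.out⟩
  have : (simpSetoid R).r (Quotient.out i) ⟨m, hm.out⟩ := Quotient.mk_out (s := simpSetoid R) _
  obtain ⟨f⟩ := this
  exact ⟨i, ⟨e.trans f.symm⟩⟩

theorem Irr.eq_of_iso (i j : Irr R) (h : Nonempty (i.S ≃ₗ[R] j.S)) : i = j := by
  rw [← Quotient.out_eq i, ← Quotient.out_eq j]
  exact Quotient.sound h

end Cover

theorem exists_irr_map (𝕜 : Type) {R : Type} [Field 𝕜] [Ring R] [Algebra 𝕜 R]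
    [FiniteDimensional 𝕜 R] (M : Type) [AddCommGroup M] [Module R M] [Nontrivial M] :
    ∃ (i : Irr R) (f : i.S →ₗ[R] M), f ≠ 0 := by
  haveI : IsArtinianRing R := isArtinian_of_tower 𝕜 inferInstance
  obtain ⟨x, hx⟩ := exists_ne (0 : M)
  have hne : (Submodule.span R {x}) ≠ ⊥ := by simpa using hx
  haveI : Nontrivial (Submodule.span R {x}) := Submodule.nontrivial_iff_ne_bot.2 hne
  haveI : IsArtinian R (Submodule.span R {x}) := inferInstance
  obtain ⟨N, hN, -⟩ :=
    (eq_bot_or_exists_atom_le (⊤ : Submodule R (Submodule.span R {x}))).resolve_left top_ne_bot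
  have hs : IsSimpleModule R N := isSimpleModule_iff_isAtom.2 hN
  obtain ⟨i, ⟨e⟩⟩ := Irr.exists_iso N hs
  refine ⟨i, (Submodule.subtype _) ∘ₗ N.subtype ∘ₗ e.symm.toLinearMap, fun h => ?_⟩
  haveI := IsSimpleModule.nontrivial R N
  obtain ⟨y, hy⟩ := exists_ne (0 : N)
  have := LinearMap.congr_fun h (e y)
  apply hy
  simpa using this

section TP

/-- Tensor product, as a module over the tensor product of algebras. -/
def TP (𝕜 M N : Type) [Field 𝕜] [AddCommGroup M] [AddCommGroup N] [Module 𝕜 M] [Module 𝕜 N] :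
    Type := M ⊗[𝕜] N

variable {𝕜 A B : Type} [Field 𝕜] [Ring A] [Ring B] [Algebra 𝕜 A] [Algebra 𝕜 B]
variable {M N : Type} [AddCommGroup M] [AddCommGroup N] [Module 𝕜 M] [Module 𝕜 N]
variable [Module A M] [Module B N] [IsScalarTower 𝕜 A M] [IsScalarTower 𝕜 B N]

instance : AddCommGroup (TP 𝕜 M N) := inferInstanceAs (AddCommGroup (M ⊗[𝕜] N))
instance : Module 𝕜 (TP 𝕜 M N) := inferInstanceAs (Module 𝕜 (M ⊗[𝕜] N))

/-- The action. -/
def TPact (𝕜 A B M N : Type) [Field 𝕜] [Ring A] [Ring B] [Algebra 𝕜 A] [Algebra 𝕜 B]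
    [AddCommGroup M] [AddCommGroup N] [Module 𝕜 M] [Module 𝕜 N]
    [Module A M] [Module B N] [IsScalarTower 𝕜 A M] [IsScalarTower 𝕜 B N] :
    A ⊗[𝕜] B →ₐ[𝕜] Module.End 𝕜 (M ⊗[𝕜] N) :=
  (Module.endTensorEndAlgHom (R := 𝕜) (S := 𝕜) (A := 𝕜) (M := M) (N := N)).comp
    (Algebra.TensorProduct.map (Algebra.lsmul 𝕜 𝕜 M : A →ₐ[𝕜] Module.End 𝕜 M)
      (Algebra.lsmul 𝕜 𝕜 N : B →ₐ[𝕜] Module.End 𝕜 N))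

instance : Module (A ⊗[𝕜] B) (TP 𝕜 M N) :=
  Module.compHom (M ⊗[𝕜] N) (TPact 𝕜 A B M N).toRingHom

theorem TP.smul_def (r : A ⊗[𝕜] B) (x : TP 𝕜 M N) : r • x = TPact 𝕜 A B M N r x := rfl

instance : IsScalarTower 𝕜 (A ⊗[𝕜] B) (TP 𝕜 M N) := ⟨fun c r x => by
  rw [TP.smul_def, TP.smul_def, map_smul]; rfl⟩

/-- Pure tensor. -/
def TP.t (𝕜 : Type) {M N : Type} [Field 𝕜] [AddCommGroup M] [AddCommGroup N] [Module 𝕜 M]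
    [Module 𝕜 N] (m : M) (n : N) : TP 𝕜 M N := m ⊗ₜ[𝕜] n

theorem TP.smul_t (a : A) (b : B) (m : M) (n : N) :
    (a ⊗ₜ[𝕜] b) • TP.t 𝕜 m n = TP.t 𝕜 (a • m) (b • n) := rfl

theorem TP.ind {p : TP 𝕜 M N → Prop} (h0 : p 0) (ht : ∀ m n, p (TP.t 𝕜 m n))
    (ha : ∀ x y, p x → p y → p (x + y)) (x : TP 𝕜 M N) : p x :=
  TensorProduct.induction_on x h0 ht ha

/-- Construct linear maps out of `TP`. -/
def TP.lift {U : Type} [AddCommGroup U] [Module 𝕜 U] [Module (A ⊗[𝕜] B) U]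
    (f : M →ₗ[𝕜] N →ₗ[𝕜] U)
    (hf : ∀ (a : A) (b : B) m n, f (a • m) (b • n) = (a ⊗ₜ[𝕜] b) • f m n) :
    TP 𝕜 M N →ₗ[A ⊗[𝕜] B] U where
  toFun := TensorProduct.lift f
  map_add' := map_add _
  map_smul' r x := by
    simp only [RingHom.id_apply]
    induction r using TensorProduct.induction_on with
    | zero => rw [zero_smul, zero_smul]; exact map_zero _
    | add r s hr hs => rw [add_smul, add_smul, ← hr, ← hs]; exact map_add _ _ _
    | tmul a b =>
      induction x using TP.ind with
      | h0 => rw [smul_zero]; erw [map_zero]; rw [smul_zero]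
      | ht m n => exact hf a b m n
      | ha x y hx hy =>
        rw [smul_add]
        refine (map_add (TensorProduct.lift f) _ _).trans ?_
        rw [hx, hy, ← smul_add]
        congr 1
        exact (map_add (TensorProduct.lift f) x y).symm

theorem TP.lift_t {U : Type} [AddCommGroup U] [Module 𝕜 U] [Module (A ⊗[𝕜] B) U]
    (f : M →ₗ[𝕜] N →ₗ[𝕜] U)
    (hf : ∀ (a : A) (b : B) m n, f (a • m) (b • n) = (a ⊗ₜ[𝕜] b) • f m n) (m : M) (n : N) :
    TP.lift f hf (TP.t 𝕜 m n) = f m n := rfl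

theorem TP.hom_ext {U : Type} [AddCommGroup U] [Module (A ⊗[𝕜] B) U]
    {f g : TP 𝕜 M N →ₗ[A ⊗[𝕜] B] U} (h : ∀ m n, f (TP.t 𝕜 m n) = g (TP.t 𝕜 m n)) : f = g := by
  ext x
  induction x using TP.ind with
  | h0 => simp
  | ht m n => exact h m n
  | ha x y hx hy => simp [hx, hy]

variable {M' N' : Type} [AddCommGroup M'] [AddCommGroup N'] [Module 𝕜 M'] [Module 𝕜 N']
variable [Module A M'] [Module B N'] [IsScalarTower 𝕜 A M'] [IsScalarTower 𝕜 B N']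

/-- Functoriality. -/
def TP.map (f : M →ₗ[A] M') (g : N →ₗ[B] N') : TP 𝕜 M N →ₗ[A ⊗[𝕜] B] TP 𝕜 M' N' :=
  TP.lift ((TensorProduct.mk 𝕜 M' N').compl₁₂ (f.restrictScalars 𝕜) (g.restrictScalars 𝕜))
    (fun a b m n => by
      change TP.t 𝕜 (f (a • m)) (g (b • n)) = _
      rw [map_smul, map_smul]
      rfl)

theorem TP.map_t (f : M →ₗ[A] M') (g : N →ₗ[B] N') (m : M) (n : N) :
    TP.map (𝕜 := 𝕜) f g (TP.t 𝕜 m n) = TP.t 𝕜 (f m) (g n) := rfl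

theorem TP.map_apply (f : M →ₗ[A] M') (g : N →ₗ[B] N') (x : TP 𝕜 M N) :
    TP.map (𝕜 := 𝕜) f g x =
      TensorProduct.map (f.restrictScalars 𝕜) (g.restrictScalars 𝕜) x := by
  induction x using TP.ind with
  | h0 => rw [map_zero]; exact (map_zero _).symm
  | ht m n => rfl
  | ha x y hx hy => rw [map_add, hx, hy]; exact (map_add _ _ _).symm

theorem TP.map_surjective {f : M →ₗ[A] M'} {g : N →ₗ[B] N'} (hf : Function.Surjective f)
    (hg : Function.Surjective g) : Function.Surjective (TP.map (𝕜 := 𝕜) f g) := by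
  intro y
  obtain ⟨x, hx⟩ := TensorProduct.map_surjective (g := f.restrictScalars 𝕜)
    (g' := g.restrictScalars 𝕜) hf hg y
  exact ⟨x, (TP.map_apply f g x).trans hx⟩

theorem TP.t_add_left (m m' : M) (n : N) : TP.t 𝕜 (m + m') n = TP.t 𝕜 m n + TP.t 𝕜 m' n :=
  TensorProduct.add_tmul _ _ _
theorem TP.t_add_right (m : M) (n n' : N) : TP.t 𝕜 m (n + n') = TP.t 𝕜 m n + TP.t 𝕜 m n' :=
  TensorProduct.tmul_add _ _ _
theorem TP.t_zero_left (n : N) : TP.t 𝕜 (0 : M) n = 0 := TensorProduct.zero_tmul _ _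
theorem TP.t_zero_right (m : M) : TP.t 𝕜 m (0 : N) = 0 := TensorProduct.tmul_zero _ _

theorem TP.ker_map {U : Type} [AddCommGroup U] [Module (A ⊗[𝕜] B) U]
    (f : M →ₗ[A] M') (g : N →ₗ[B] N') (hf : Function.Surjective f)
    (hg : Function.Surjective g) (h : TP 𝕜 M N →ₗ[A ⊗[𝕜] B] U)
    (h1 : ∀ m n, f m = 0 → h (TP.t 𝕜 m n) = 0) (h2 : ∀ m n, g n = 0 → h (TP.t 𝕜 m n) = 0) :
    LinearMap.ker (TP.map (𝕜 := 𝕜) f g) ≤ LinearMap.ker h := by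
  have key : ∀ x : M ⊗[𝕜] N,
      x ∈ LinearMap.ker (TensorProduct.map (f.restrictScalars 𝕜) (g.restrictScalars 𝕜)) →
      h (show TP 𝕜 M N from x) = 0 := by
    intro x hx'
    rw [TensorProduct.map_ker (g := f.restrictScalars 𝕜)
      (LinearMap.exact_subtype_ker_map (f.restrictScalars 𝕜)) hf (g' := g.restrictScalars 𝕜)
      (LinearMap.exact_subtype_ker_map (g.restrictScalars 𝕜)) hg] at hx'
    obtain ⟨y, ⟨y, rfl⟩, z, ⟨z, rfl⟩, rfl⟩ := Submodule.mem_sup.1 hx'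
    clear hx'
    refine (map_add h _ _).trans ?_
    have e1 : h (show TP 𝕜 M N from
        LinearMap.lTensor M (LinearMap.ker (g.restrictScalars 𝕜)).subtype y) = 0 := by
      induction y using TensorProduct.induction_on with
      | zero => rw [map_zero]; exact map_zero h
      | tmul m n => exact h2 m n.1 n.2
      | add a b ha hb =>
        rw [map_add]
        refine (map_add h _ _).trans ?_
        rw [ha, hb, add_zero]
    have e2 : h (show TP 𝕜 M N from
        LinearMap.rTensor N (LinearMap.ker (f.restrictScalars 𝕜)).subtype z) = 0 := by
      induction z using TensorProduct.induction_on with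
      | zero => rw [map_zero]; exact map_zero h
      | tmul m n => exact h1 m.1 n m.2
      | add a b ha hb =>
        rw [map_add]
        refine (map_add h _ _).trans ?_
        rw [ha, hb, add_zero]
    exact (congrArg₂ (· + ·) e1 e2).trans (add_zero _)
  intro x hx
  rw [LinearMap.mem_ker, TP.map_apply] at hx
  exact key x hx

/-- Contract the right factor. -/
theorem TP.exists_left (y : TP 𝕜 M N) (hy : y ≠ 0) :
    ∃ g : TP 𝕜 M N →+ M, (∀ (a : A) x, g ((a ⊗ₜ[𝕜] (1 : B)) • x) = a • g x) ∧ g y ≠ 0 := by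
  classical
  let b := Module.Basis.ofVectorSpace 𝕜 N
  have h : TensorProduct.equivFinsuppOfBasisRight (M := M) b y ≠ 0 := by
    intro h
    exact hy ((LinearEquiv.map_eq_zero_iff _).1 h)
  obtain ⟨i, hi⟩ := Finsupp.ne_iff.1 h
  refine ⟨((Finsupp.applyAddHom i).comp
    (TensorProduct.equivFinsuppOfBasisRight (M := M) b).toLinearMap.toAddMonoidHom), ?_, hi⟩
  intro a x
  induction x using TP.ind with
  | h0 => rw [smul_zero, map_zero, smul_zero]
  | ha x y hx hy => rw [smul_add, map_add, map_add, hx, hy, smul_add]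
  | ht m n =>
    rw [TP.smul_t, one_smul]
    change TensorProduct.equivFinsuppOfBasisRight b ((a • m) ⊗ₜ[𝕜] n) i =
      a • TensorProduct.equivFinsuppOfBasisRight b (m ⊗ₜ[𝕜] n) i
    rw [TensorProduct.equivFinsuppOfBasisRight_apply_tmul_apply,
      TensorProduct.equivFinsuppOfBasisRight_apply_tmul_apply]
    rw [smul_comm]

/-- Contract the left factor. -/
theorem TP.exists_right (y : TP 𝕜 M N) (hy : y ≠ 0) :
    ∃ g : TP 𝕜 M N →+ N, (∀ (b : B) x, g (((1 : A) ⊗ₜ[𝕜] b) • x) = b • g x) ∧ g y ≠ 0 := by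
  classical
  let b := Module.Basis.ofVectorSpace 𝕜 M
  have h : TensorProduct.equivFinsuppOfBasisLeft (N := N) b y ≠ 0 := by
    intro h
    exact hy ((LinearEquiv.map_eq_zero_iff _).1 h)
  obtain ⟨i, hi⟩ := Finsupp.ne_iff.1 h
  refine ⟨((Finsupp.applyAddHom i).comp
    (TensorProduct.equivFinsuppOfBasisLeft (N := N) b).toLinearMap.toAddMonoidHom), ?_, hi⟩
  intro a x
  induction x using TP.ind with
  | h0 => rw [smul_zero, map_zero, smul_zero]
  | ha x y hx hy => rw [smul_add, map_add, map_add, hx, hy, smul_add]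
  | ht m n =>
    rw [TP.smul_t, one_smul]
    change TensorProduct.equivFinsuppOfBasisLeft b (m ⊗ₜ[𝕜] (a • n)) i =
      a • TensorProduct.equivFinsuppOfBasisLeft b (m ⊗ₜ[𝕜] n) i
    rw [TensorProduct.equivFinsuppOfBasisLeft_apply_tmul_apply,
      TensorProduct.equivFinsuppOfBasisLeft_apply_tmul_apply]
    rw [smul_comm]

theorem TP.hom_left (f : TP 𝕜 M N →ₗ[A ⊗[𝕜] B] TP 𝕜 M' N') (m : M) (n : N)
    (h : f (TP.t 𝕜 m n) ≠ 0) : ∃ g : M →ₗ[A] M', g m ≠ 0 := by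
  obtain ⟨g, hg, hne⟩ := TP.exists_left (A := A) (B := B) _ h
  refine ⟨{ toFun := fun m => g (f (TP.t 𝕜 m n)), map_add' := ?_, map_smul' := ?_ }, hne⟩
  · intro x y; rw [TP.t_add_left, map_add, map_add]
  · intro a x
    simp only [RingHom.id_apply]
    rw [← hg, ← map_smul, TP.smul_t, one_smul]

theorem TP.hom_right (f : TP 𝕜 M N →ₗ[A ⊗[𝕜] B] TP 𝕜 M' N') (m : M) (n : N)
    (h : f (TP.t 𝕜 m n) ≠ 0) : ∃ g : N →ₗ[B] N', g n ≠ 0 := by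
  obtain ⟨g, hg, hne⟩ := TP.exists_right (A := A) (B := B) _ h
  refine ⟨{ toFun := fun n => g (f (TP.t 𝕜 m n)), map_add' := ?_, map_smul' := ?_ }, hne⟩
  · intro x y; rw [TP.t_add_right, map_add, map_add]
  · intro a x
    simp only [RingHom.id_apply]
    rw [← hg, ← map_smul, TP.smul_t, one_smul]

theorem TP.exists_t_ne {U : Type} [AddCommGroup U] [Module (A ⊗[𝕜] B) U]
    {f : TP 𝕜 M N →ₗ[A ⊗[𝕜] B] U} (h : f ≠ 0) : ∃ m n, f (TP.t 𝕜 m n) ≠ 0 := by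
  by_contra! hc
  exact h (TP.hom_ext hc)

end TP

section dens

variable {𝕜 A : Type} [Field 𝕜] [Ring A] [Algebra 𝕜 A] [FiniteDimensional 𝕜 A]

theorem density (S : Type) [AddCommGroup S] [Module A S] [Module 𝕜 S] [IsScalarTower 𝕜 A S]
    [IsSimpleModule A S]
    (h : ∀ f : S →ₗ[A] S, ∃ c : 𝕜, ∀ m : S, f m = algebraMap 𝕜 A c • m) (f : S →ₗ[𝕜] S) :
    ∃ a : A, Algebra.lsmul 𝕜 𝕜 S a = f := by
  haveI : Module.Finite 𝕜 S := Module.Finite.trans A S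
  let F : Module.End (Module.End A S) S :=
    { toFun := f, map_add' := map_add f, map_smul' := fun φ m => by
        obtain ⟨c, hc⟩ := h φ
        simp only [RingHom.id_apply, Module.End.smul_def]
        rw [hc, hc, algebraMap_smul, algebraMap_smul, map_smul] }
  obtain ⟨s, hs⟩ := Module.Finite.fg_top (R := 𝕜) (M := S)
  obtain ⟨r, hr⟩ := jacobson_density F s
  refine ⟨r, LinearMap.ext_on hs fun m hm => ?_⟩
  exact (hr m hm).symm

end dens

section TPsimple

variable {𝕜 A B : Type} [Field 𝕜] [Ring A] [Ring B] [Algebra 𝕜 A] [Algebra 𝕜 B]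
    [FiniteDimensional 𝕜 A] [FiniteDimensional 𝕜 B]

theorem TP.simple (S T : Type) [AddCommGroup S] [Module A S] [Module 𝕜 S] [IsScalarTower 𝕜 A S]
    [IsSimpleModule A S] [AddCommGroup T] [Module B T] [Module 𝕜 T] [IsScalarTower 𝕜 B T]
    [IsSimpleModule B T]
    (hS : ∀ f : S →ₗ[A] S, ∃ c : 𝕜, ∀ m : S, f m = algebraMap 𝕜 A c • m)
    (hT : ∀ f : T →ₗ[B] T, ∃ c : 𝕜, ∀ m : T, f m = algebraMap 𝕜 B c • m) :
    IsSimpleModule (A ⊗[𝕜] B) (TP 𝕜 S T) := by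
  haveI : Module.Finite 𝕜 S := Module.Finite.trans A S
  haveI : Module.Finite 𝕜 T := Module.Finite.trans B T
  haveI := IsSimpleModule.nontrivial A S
  haveI := IsSimpleModule.nontrivial B T
  have hsurj : ∀ f : Module.End 𝕜 (S ⊗[𝕜] T), ∃ r, TPact 𝕜 A B S T r = f := by
    intro f
    obtain ⟨z, rfl⟩ := (homTensorHomEquiv 𝕜 S T S T).surjective f
    induction z using TensorProduct.induction_on with
    | zero => exact ⟨0, by simp⟩
    | add x y hx hy =>
      obtain ⟨r, hr⟩ := hx
      obtain ⟨s, hs⟩ := hy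
      exact ⟨r + s, by rw [map_add, map_add, hr, hs]⟩
    | tmul g h =>
      obtain ⟨a, rfl⟩ := density S hS g
      obtain ⟨b, rfl⟩ := density T hT h
      refine ⟨a ⊗ₜ b, ?_⟩
      rw [homTensorHomEquiv_apply]
      rfl
  have hsurj2 : ∀ x y : S ⊗[𝕜] T, x ≠ 0 → ∃ r, TPact 𝕜 A B S T r x = y := by
    intro x y hx
    obtain ⟨g, hg⟩ := LinearMap.exists_leftInverse_of_injective
      (LinearMap.toSpanSingleton 𝕜 (S ⊗[𝕜] T) x) (LinearMap.ker_toSpanSingleton 𝕜 hx)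
    have hgx : g x = 1 := by simpa using LinearMap.congr_fun hg 1
    obtain ⟨r, hr⟩ := hsurj (g.smulRight y)
    refine ⟨r, ?_⟩
    rw [hr, LinearMap.smulRight_apply, hgx, one_smul]
  have : Nontrivial (S ⊗[𝕜] T) := inferInstance
  rw [isSimpleModule_iff_toSpanSingleton_surjective]
  exact ⟨this, fun x hx y => hsurj2 x y hx⟩

variable (𝕜 A B) in
theorem TP.classify (hsim : ∀ (i : Irr A) (j : Irr B), IsSimpleModule (A ⊗[𝕜] B) (TP 𝕜 i.S j.S))
    (U : Type) [AddCommGroup U] [Module (A ⊗[𝕜] B) U]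
    (hU : IsSimpleModule (A ⊗[𝕜] B) U) :
    ∃ ij : Irr A × Irr B, Nonempty (U ≃ₗ[A ⊗[𝕜] B] TP 𝕜 ij.1.S ij.2.S) := by
  letI : Module A U := Module.compHom U
    (Algebra.TensorProduct.includeLeft : A →ₐ[𝕜] A ⊗[𝕜] B).toRingHom
  letI : Module B U := Module.compHom U
    (Algebra.TensorProduct.includeRight : B →ₐ[𝕜] A ⊗[𝕜] B).toRingHom
  letI : Module 𝕜 U := Module.compHom U (algebraMap 𝕜 (A ⊗[𝕜] B))
  have hAs : ∀ (a : A) (u : U), a • u = (a ⊗ₜ[𝕜] (1 : B)) • u := fun _ _ => rfl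
  have hBs : ∀ (b : B) (u : U), b • u = ((1 : A) ⊗ₜ[𝕜] b) • u := fun _ _ => rfl
  have hks : ∀ (c : 𝕜) (u : U), c • u = (algebraMap 𝕜 (A ⊗[𝕜] B) c) • u := fun _ _ => rfl
  haveI : SMulCommClass A B U := ⟨fun a b u => by
    rw [hAs, hBs, hAs, hBs, smul_smul, smul_smul]; simp⟩
  haveI : IsScalarTower 𝕜 A U := ⟨fun c a u => by
    rw [hAs, hAs, hks, smul_smul, ← Algebra.smul_def, TensorProduct.smul_tmul']⟩
  haveI : IsScalarTower 𝕜 B U := ⟨fun c a u => by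
    rw [hBs, hBs, hks, smul_smul, ← Algebra.smul_def, TensorProduct.tmul_smul]⟩
  haveI := IsSimpleModule.nontrivial (A ⊗[𝕜] B) U
  obtain ⟨i, f, hf⟩ := exists_irr_map 𝕜 (R := A) U
  haveI : Nontrivial (i.S →ₗ[A] U) := ⟨f, 0, hf⟩
  obtain ⟨j, h, hh⟩ := exists_irr_map 𝕜 (R := B) (i.S →ₗ[A] U)
  haveI := hsim i j
  let F : i.S →ₗ[𝕜] j.S →ₗ[𝕜] U :=
    LinearMap.mk₂ 𝕜 (fun s t => h t s) (fun s s' t => map_add _ _ _)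
      (fun c s t => (h t).map_smul_of_tower c s)
      (fun s t t' => by rw [map_add]; rfl)
      (fun c s t => by
        rw [← algebraMap_smul B c t, map_smul]
        change algebraMap 𝕜 B c • (h t s) = _
        rw [algebraMap_smul])
  let φ : TP 𝕜 i.S j.S →ₗ[A ⊗[𝕜] B] U := TP.lift F (fun a b s t => by
    change h (b • t) (a • s) = _ • h t s
    rw [map_smul, map_smul]
    change a • b • h t s = _
    rw [hAs, hBs, smul_smul]; simp)
  have hφ : φ ≠ 0 := by
    intro h0
    apply hh
    refine LinearMap.ext fun t => LinearMap.ext fun s => ?_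
    exact LinearMap.congr_fun h0 (TP.t 𝕜 s t)
  exact ⟨(i, j), ⟨(LinearEquiv.ofBijective φ (LinearMap.bijective_of_ne_zero hφ)).symm⟩⟩

end TPsimple

section fp

variable {𝕜 A B : Type} [Field 𝕜] [Ring A] [Ring B] [Algebra 𝕜 A] [Algebra 𝕜 B]

theorem exists_coords (A : Type) [Ring A] (M : Type) [AddCommGroup M] [Module A M]
    [Module.Finite A M] [Module.Projective A M] :
    ∃ (n : ℕ) (x : Fin n → M) (c : Fin n → M →ₗ[A] A), ∀ m, ∑ k, c k m • x k = m := by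
  obtain ⟨n, f, hf⟩ := Module.Finite.exists_fin' A M
  obtain ⟨g, hg⟩ := Module.projective_lifting_property f LinearMap.id hf
  refine ⟨n, fun k => f (Pi.single k 1), fun k => LinearMap.proj k ∘ₗ g, fun m => ?_⟩
  have h := LinearMap.congr_fun hg m
  rw [LinearMap.comp_apply, LinearMap.id_apply] at h
  conv_rhs => rw [← h, pi_eq_sum_univ' (g m), map_sum]
  refine Finset.sum_congr rfl fun k _ => ?_
  rw [LinearMap.comp_apply, LinearMap.proj_apply, ← map_smul]

theorem of_coords {R : Type} [Ring R] {M ι : Type} [AddCommGroup M] [Module R M] [Fintype ι]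
    (x : ι → M) (c : ι → M →ₗ[R] R) (h : ∀ m, ∑ k, c k m • x k = m) :
    Module.Finite R M ∧ Module.Projective R M := by
  have h' : ∀ m, (Fintype.linearCombination R x) ((LinearMap.pi c) m) = m := by
    intro m
    rw [Fintype.linearCombination_apply]
    exact h m
  exact ⟨Module.Finite.of_surjective (Fintype.linearCombination R x) fun m => ⟨_, h' m⟩,
    Module.Projective.of_split (LinearMap.pi c) (Fintype.linearCombination R x)
      (LinearMap.ext h')⟩

variable {M N : Type} [AddCommGroup M] [AddCommGroup N] [Module 𝕜 M] [Module 𝕜 N]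
variable [Module A M] [Module B N] [IsScalarTower 𝕜 A M] [IsScalarTower 𝕜 B N]

theorem TP.finProj [Module.Finite A M] [Module.Projective A M] [Module.Finite B N]
    [Module.Projective B N] :
    Module.Finite (A ⊗[𝕜] B) (TP 𝕜 M N) ∧ Module.Projective (A ⊗[𝕜] B) (TP 𝕜 M N) := by
  obtain ⟨m, x, c, hx⟩ := exists_coords A M
  obtain ⟨n, y, d, hy⟩ := exists_coords B N
  let cc : Fin m × Fin n → TP 𝕜 M N →ₗ[A ⊗[𝕜] B] A ⊗[𝕜] B := fun kl =>
    TP.lift ((TensorProduct.mk 𝕜 A B).compl₁₂ ((c kl.1).restrictScalars 𝕜)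
      ((d kl.2).restrictScalars 𝕜)) (fun a b p q => by
        change (c kl.1 (a • p)) ⊗ₜ[𝕜] (d kl.2 (b • q)) =
          (a ⊗ₜ[𝕜] b) • ((c kl.1 p) ⊗ₜ[𝕜] (d kl.2 q))
        rw [map_smul, map_smul, smul_eq_mul, smul_eq_mul, smul_eq_mul,
          Algebra.TensorProduct.tmul_mul_tmul])
  refine of_coords (fun kl : Fin m × Fin n => TP.t 𝕜 (x kl.1) (y kl.2)) cc ?_
  intro z
  induction z using TP.ind with
  | h0 => simp
  | ha u v hu hv =>
    conv_rhs => rw [← hu, ← hv]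
    rw [← Finset.sum_add_distrib]
    exact Finset.sum_congr rfl fun k _ => by rw [map_add, add_smul]
  | ht p q =>
    have h1 : ∀ kl : Fin m × Fin n, cc kl (TP.t 𝕜 p q) • TP.t 𝕜 (x kl.1) (y kl.2) =
        TP.t 𝕜 (c kl.1 p • x kl.1) (d kl.2 q • y kl.2) := fun kl => rfl
    simp only [h1]
    conv_rhs => rw [← hx p, ← hy q]
    rw [Fintype.sum_prod_type]
    refine Eq.trans ?_ (TensorProduct.sum_tmul _ _ _).symm
    refine Finset.sum_congr rfl fun k _ => ?_
    exact (TensorProduct.tmul_sum (R := 𝕜) (c k p • x k) Finset.univ (fun l => d l q • y l)).symm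

attribute [local instance] FGProj.kmod

instance FGProj.ktower' (P : FGProj A) : IsScalarTower 𝕜 A P.M := FGProj.ktower 𝕜 P

/-- tensor product of f.g. projectives -/
def FGProj.tensor (𝕜 : Type) [Field 𝕜] [Algebra 𝕜 A] [Algebra 𝕜 B] (P : FGProj A) (Q : FGProj B) :
    FGProj (A ⊗[𝕜] B) :=
  haveI := P.fin
  haveI := P.proj
  haveI := Q.fin
  haveI := Q.proj
  { M := TP 𝕜 P.M Q.M
    fin := (TP.finProj (𝕜 := 𝕜) (A := A) (B := B) (M := P.M) (N := Q.M)).1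
    proj := (TP.finProj (𝕜 := 𝕜) (A := A) (B := B) (M := P.M) (N := Q.M)).2 }

/-- distributivity -/
def TP.prod_left {L M₁ M₂ X : Type} [AddCommGroup L] [Module 𝕜 L] [Module A L] [IsScalarTower 𝕜 A L]
    [AddCommGroup M₁] [Module 𝕜 M₁] [Module A M₁] [IsScalarTower 𝕜 A M₁]
    [AddCommGroup M₂] [Module 𝕜 M₂] [Module A M₂] [IsScalarTower 𝕜 A M₂]
    [AddCommGroup X] [Module 𝕜 X] [Module B X] [IsScalarTower 𝕜 B X]
    (e : L ≃ₗ[A] M₁ × M₂) :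
    TP 𝕜 L X ≃ₗ[A ⊗[𝕜] B] TP 𝕜 M₁ X × TP 𝕜 M₂ X :=
  let f1 : L →ₗ[A] M₁ := LinearMap.fst A M₁ M₂ ∘ₗ e.toLinearMap
  let f2 : L →ₗ[A] M₂ := LinearMap.snd A M₁ M₂ ∘ₗ e.toLinearMap
  let g1 : M₁ →ₗ[A] L := e.symm.toLinearMap ∘ₗ LinearMap.inl A M₁ M₂
  let g2 : M₂ →ₗ[A] L := e.symm.toLinearMap ∘ₗ LinearMap.inr A M₁ M₂
  let F : TP 𝕜 L X →ₗ[A ⊗[𝕜] B] TP 𝕜 M₁ X × TP 𝕜 M₂ X :=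
    (TP.map f1 LinearMap.id).prod (TP.map f2 LinearMap.id)
  let G : TP 𝕜 M₁ X × TP 𝕜 M₂ X →ₗ[A ⊗[𝕜] B] TP 𝕜 L X :=
    (TP.map g1 LinearMap.id).coprod (TP.map g2 LinearMap.id)
  LinearEquiv.ofLinearMap F G
    (by
      refine LinearMap.prod_ext (TP.hom_ext fun m n => ?_) (TP.hom_ext fun m n => ?_)
      · simp [F, G, TP.map_t, f1, f2, g1, g2, TP.t_zero_left]
      · simp [F, G, TP.map_t, f1, f2, g1, g2, TP.t_zero_left])
    (by
      refine TP.hom_ext fun m n => ?_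
      simp only [F, G, LinearMap.comp_apply, LinearMap.prod_apply, Function.prod,
        LinearMap.coprod_apply, TP.map_t, LinearMap.id_apply]
      rw [← TP.t_add_left]
      congr 1
      simp only [f1, f2, g1, g2, LinearMap.comp_apply, LinearEquiv.coe_coe]
      rw [← map_add]
      simp)

/-- distributivity -/
def TP.prod_right {L M₁ M₂ X : Type} [AddCommGroup L] [Module 𝕜 L] [Module B L] [IsScalarTower 𝕜 B L]
    [AddCommGroup M₁] [Module 𝕜 M₁] [Module B M₁] [IsScalarTower 𝕜 B M₁]
    [AddCommGroup M₂] [Module 𝕜 M₂] [Module B M₂] [IsScalarTower 𝕜 B M₂]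
    [AddCommGroup X] [Module 𝕜 X] [Module A X] [IsScalarTower 𝕜 A X]
    (e : L ≃ₗ[B] M₁ × M₂) :
    TP 𝕜 X L ≃ₗ[A ⊗[𝕜] B] TP 𝕜 X M₁ × TP 𝕜 X M₂ :=
  let f1 : L →ₗ[B] M₁ := LinearMap.fst B M₁ M₂ ∘ₗ e.toLinearMap
  let f2 : L →ₗ[B] M₂ := LinearMap.snd B M₁ M₂ ∘ₗ e.toLinearMap
  let g1 : M₁ →ₗ[B] L := e.symm.toLinearMap ∘ₗ LinearMap.inl B M₁ M₂
  let g2 : M₂ →ₗ[B] L := e.symm.toLinearMap ∘ₗ LinearMap.inr B M₁ M₂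
  let F : TP 𝕜 X L →ₗ[A ⊗[𝕜] B] TP 𝕜 X M₁ × TP 𝕜 X M₂ :=
    (TP.map LinearMap.id f1).prod (TP.map LinearMap.id f2)
  let G : TP 𝕜 X M₁ × TP 𝕜 X M₂ →ₗ[A ⊗[𝕜] B] TP 𝕜 X L :=
    (TP.map LinearMap.id g1).coprod (TP.map LinearMap.id g2)
  LinearEquiv.ofLinearMap F G
    (by
      refine LinearMap.prod_ext (TP.hom_ext fun m n => ?_) (TP.hom_ext fun m n => ?_)
      · simp [F, G, TP.map_t, f1, f2, g1, g2, TP.t_zero_right]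
      · simp [F, G, TP.map_t, f1, f2, g1, g2, TP.t_zero_right])
    (by
      refine TP.hom_ext fun m n => ?_
      simp only [F, G, LinearMap.comp_apply, LinearMap.prod_apply, Function.prod,
        LinearMap.coprod_apply, TP.map_t, LinearMap.id_apply]
      rw [← TP.t_add_right]
      congr 1
      simp only [f1, f2, g1, g2, LinearMap.comp_apply, LinearEquiv.coe_coe]
      rw [← map_add]
      simp)

theorem TP.tensor_add_left (P Q R : FGProj A) (S : FGProj B) (e : R.M ≃ₗ[A] P.M × Q.M) :
    K0cls (FGProj.tensor 𝕜 R S) = K0cls (FGProj.tensor 𝕜 P S) + K0cls (FGProj.tensor 𝕜 Q S) :=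
  K0cls_add (TP.prod_left (𝕜 := 𝕜) (X := S.M) e)

theorem TP.tensor_add_right (P Q R : FGProj B) (S : FGProj A) (e : R.M ≃ₗ[B] P.M × Q.M) :
    K0cls (FGProj.tensor 𝕜 S R) = K0cls (FGProj.tensor 𝕜 S P) + K0cls (FGProj.tensor 𝕜 S Q) :=
  K0cls_add (TP.prod_right (𝕜 := 𝕜) (X := S.M) e)

variable (𝕜 A B) in
/-- The bilinear pairing. -/
def K0pair : K0 A →+ K0 B →+ K0 (A ⊗[𝕜] B) :=
  K0lift (fun P => K0lift (fun Q => K0cls (FGProj.tensor 𝕜 P Q))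
    (fun P' Q' R' ⟨e⟩ => TP.tensor_add_right P' Q' R' P e))
    (fun P' Q' R' ⟨e⟩ => by
      ext z
      rw [AddMonoidHom.add_apply]
      induction z using K0_induction with
      | h1 S => rw [K0lift_cls, K0lift_cls, K0lift_cls]; exact TP.tensor_add_left P' Q' R' S e
      | hneg x hx => rw [map_neg, map_neg, map_neg, hx, neg_add]
      | h0 => simp
      | hadd x y hx hy => rw [map_add, map_add, map_add, hx, hy]; abel)

theorem K0pair_cls (P : FGProj A) (Q : FGProj B) :
    K0pair 𝕜 A B (K0cls P) (K0cls Q) = K0cls (FGProj.tensor 𝕜 P Q) := by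
  rw [K0pair, K0lift_cls, K0lift_cls]

variable (𝕜 A B) in
/-- The induced map on the tensor product. -/
def K0ten : K0 A ⊗[ℤ] K0 B →ₗ[ℤ] K0 (A ⊗[𝕜] B) :=
  TensorProduct.lift (LinearMap.mk₂ ℤ (fun x y => K0pair 𝕜 A B x y)
    (fun x y z => by rw [map_add]; rfl) (fun c x y => by rw [map_zsmul]; rfl)
    (fun x y z => map_add _ _ _) (fun c x y => map_zsmul _ _ _))

theorem K0ten_cls (P : FGProj A) (Q : FGProj B) :
    K0ten 𝕜 A B (K0cls P ⊗ₜ[ℤ] K0cls Q) = K0cls (FGProj.tensor 𝕜 P Q) := K0pair_cls P Q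

theorem tensor_iso (P : FGProj A) (Q : FGProj B) (T : FGProj (A ⊗[𝕜] B))
    (u : T.M ≃+ P.M ⊗[𝕜] Q.M)
    (hu : ∀ (a : A) (b : B) (p : P.M) (q : Q.M),
      u.symm ((a • p) ⊗ₜ[𝕜] (b • q)) = (a ⊗ₜ[𝕜] b) • u.symm (p ⊗ₜ[𝕜] q)) :
    K0cls (FGProj.tensor 𝕜 P Q) = K0cls T := by
  apply K0cls_iso
  let v : TP 𝕜 P.M Q.M ≃+ T.M := u.symm
  have hv : ∀ (r : A ⊗[𝕜] B) (x : TP 𝕜 P.M Q.M), v (r • x) = r • v x := by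
    intro r x
    induction r using TensorProduct.induction_on with
    | zero => rw [zero_smul, zero_smul, map_zero]
    | add r s hr hs => rw [add_smul, add_smul, map_add, hr, hs]
    | tmul a b =>
      induction x using TP.ind with
      | h0 => rw [smul_zero, map_zero, smul_zero]
      | ht m n => exact hu a b m n
      | ha x y hx hy => rw [smul_add, map_add, map_add, hx, hy, smul_add]
  exact { v with map_smul' := hv }

end fp
section fin

attribute [local instance] FGProj.kmod

variable {𝕜 A B : Type} [Field 𝕜] [Ring A] [Ring B] [Algebra 𝕜 A] [Algebra 𝕜 B]
    [FiniteDimensional 𝕜 A] [FiniteDimensional 𝕜 B]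

theorem cover_kills {R M S S' : Type} [Ring R] [AddCommGroup M] [Module R M] [AddCommGroup S]
    [Module R S] [AddCommGroup S'] [Module R S'] [IsSimpleModule R S'] (π : M →ₗ[R] S)
    (hc : ∀ N : Submodule R M, IsCoatom N → N = LinearMap.ker π) (g : M →ₗ[R] S') (m : M)
    (hm : π m = 0) : g m = 0 := by
  by_contra h
  have hg : g ≠ 0 := fun h0 => h (by rw [h0]; rfl)
  have := hc _ (LinearMap.isCoatom_ker_of_surjective (LinearMap.surjective_of_ne_zero hg))
  exact h (by rw [← LinearMap.mem_ker, this]; exact hm)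

variable (𝕜) in
theorem tensor_coatom
    (hsim : ∀ (i : Irr A) (j : Irr B), IsSimpleModule (A ⊗[𝕜] B) (TP 𝕜 i.S j.S))
    (i : Irr A) (j : Irr B) {M N : Type} [AddCommGroup M] [AddCommGroup N] [Module 𝕜 M] [Module 𝕜 N]
    [Module A M] [Module B N] [IsScalarTower 𝕜 A M] [IsScalarTower 𝕜 B N]
    (π : M →ₗ[A] i.S) (ρ : N →ₗ[B] j.S)
    (hπ : Function.Surjective π) (hρ : Function.Surjective ρ)
    (hcπ : ∀ N : Submodule A M, IsCoatom N → N = LinearMap.ker π)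
    (hcρ : ∀ N : Submodule B N, IsCoatom N → N = LinearMap.ker ρ)
    (K : Submodule (A ⊗[𝕜] B) (TP 𝕜 M N)) (hK : IsCoatom K) :
    K = LinearMap.ker (TP.map (𝕜 := 𝕜) π ρ) := by
  obtain ⟨⟨i', j'⟩, ⟨e⟩⟩ := TP.classify 𝕜 A B hsim (TP 𝕜 M N ⧸ K)
    (isSimpleModule_iff_isCoatom.2 hK)
  let f : TP 𝕜 M N →ₗ[A ⊗[𝕜] B] TP 𝕜 i'.S j'.S := e.toLinearMap ∘ₗ K.mkQ
  have hf : LinearMap.ker f = K := by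
    ext x
    simp [f]
  have hle : LinearMap.ker (TP.map (𝕜 := 𝕜) π ρ) ≤ LinearMap.ker f := by
    refine TP.ker_map π ρ hπ hρ f (fun m n hm => ?_) (fun m n hn => ?_)
    · by_contra h
      obtain ⟨g, hg⟩ := TP.hom_left f m n h
      exact hg (cover_kills π hcπ g m hm)
    · by_contra h
      obtain ⟨g, hg⟩ := TP.hom_right f m n h
      exact hg (cover_kills ρ hcρ g n hn)
  rw [hf] at hle
  haveI := hsim i j
  have hco : IsCoatom (LinearMap.ker (TP.map (𝕜 := 𝕜) π ρ)) :=
    LinearMap.isCoatom_ker_of_surjective (TP.map_surjective hπ hρ)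
  rcases hco.le_iff.1 hle with h | h
  · exact absurd h hK.1
  · exact h

theorem tensor_irr_inj
    (hsim : ∀ (i : Irr A) (j : Irr B), IsSimpleModule (A ⊗[𝕜] B) (TP 𝕜 i.S j.S))
    (i i' : Irr A) (j j' : Irr B) (e : TP 𝕜 i.S j.S ≃ₗ[A ⊗[𝕜] B] TP 𝕜 i'.S j'.S) :
    i = i' ∧ j = j' := by
  haveI := hsim i j
  haveI := IsSimpleModule.nontrivial (A ⊗[𝕜] B) (TP 𝕜 i.S j.S)
  have h0 : e.toLinearMap ≠ 0 := by
    intro h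
    obtain ⟨x, hx⟩ := exists_ne (0 : TP 𝕜 i.S j.S)
    exact hx (e.map_eq_zero_iff.1 (LinearMap.congr_fun h x))
  obtain ⟨m, n, h⟩ := TP.exists_t_ne h0
  obtain ⟨g, hg⟩ := TP.hom_left _ m n h
  obtain ⟨g', hg'⟩ := TP.hom_right _ m n h
  have h1 : g ≠ 0 := fun h0 => hg (by rw [h0]; rfl)
  have h2 : g' ≠ 0 := fun h0 => hg' (by rw [h0]; rfl)
  exact ⟨Irr.eq_of_iso _ _ ⟨LinearEquiv.ofBijective g (LinearMap.bijective_of_ne_zero h1)⟩,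
    Irr.eq_of_iso _ _ ⟨LinearEquiv.ofBijective g' (LinearMap.bijective_of_ne_zero h2)⟩⟩

variable (𝕜 A B) in
theorem K0ten_equiv
    (hsim : ∀ (i : Irr A) (j : Irr B), IsSimpleModule (A ⊗[𝕜] B) (TP 𝕜 i.S j.S)) :
    ∃ e : K0 A ⊗[ℤ] K0 B ≃ₗ[ℤ] K0 (A ⊗[𝕜] B), e.toLinearMap = K0ten 𝕜 A B := by
  choose PA πA hπA hcA using fun i : Irr A => exists_cover 𝕜 (R := A) i.S
  choose PB πB hπB hcB using fun i : Irr B => exists_cover 𝕜 (R := B) i.S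
  obtain ⟨bA, hbA⟩ := basis_cover 𝕜 PA (fun i : Irr A => i.S) πA hπA
    (fun M _ _ h => Irr.exists_iso M h) Irr.eq_of_iso hcA
  obtain ⟨bB, hbB⟩ := basis_cover 𝕜 PB (fun i : Irr B => i.S) πB hπB
    (fun M _ _ h => Irr.exists_iso M h) Irr.eq_of_iso hcB
  haveI : ∀ ij : Irr A × Irr B, IsSimpleModule (A ⊗[𝕜] B) (TP 𝕜 ij.1.S ij.2.S) :=
    fun ij => hsim ij.1 ij.2
  obtain ⟨b, hb⟩ := basis_cover 𝕜 (R := A ⊗[𝕜] B)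
    (fun ij : Irr A × Irr B => FGProj.tensor 𝕜 (PA ij.1) (PB ij.2))
    (fun ij : Irr A × Irr B => TP 𝕜 ij.1.S ij.2.S)
    (fun ij => TP.map (πA ij.1) (πB ij.2))
    (fun ij => TP.map_surjective (hπA ij.1) (hπB ij.2))
    (fun M _ _ h => TP.classify 𝕜 A B hsim M h)
    (fun i j ⟨e⟩ => Prod.ext_iff.2 (tensor_irr_inj hsim _ _ _ _ e))
    (fun ij K hK => tensor_coatom 𝕜 hsim ij.1 ij.2 (πA ij.1) (πB ij.2) (hπA _) (hπB _)
      (hcA _) (hcB _) K hK)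
  refine ⟨(bA.tensorProduct bB).equiv b (Equiv.refl _), ?_⟩
  refine (bA.tensorProduct bB).ext fun ij => ?_
  rw [LinearEquiv.coe_coe, Module.Basis.equiv_apply, Equiv.refl_apply, hb,
    Module.Basis.tensorProduct_apply', hbA, hbB]
  exact (K0ten_cls (𝕜 := 𝕜) (PA ij.1) (PB ij.2)).symm

end fin


-- STATEMENT 17
theorem stmt17 (𝕜 A B : Type) [Field 𝕜] [Ring A] [Ring B] [Algebra 𝕜 A] [Algebra 𝕜 B]
    [FiniteDimensional 𝕜 A] [FiniteDimensional 𝕜 B]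
    (hA : ∀ (M : Type) [AddCommGroup M] [Module A M], IsSimpleModule A M →
      ∀ f : M →ₗ[A] M, ∃ c : 𝕜, ∀ m : M, f m = algebraMap 𝕜 A c • m)
    (hB : ∀ (M : Type) [AddCommGroup M] [Module B M], IsSimpleModule B M →
      ∀ f : M →ₗ[B] M, ∃ c : 𝕜, ∀ m : M, f m = algebraMap 𝕜 B c • m) :
    ∃ e : TensorProduct ℤ (K0 A) (K0 B) ≃+ K0 (TensorProduct 𝕜 A B),
      ∀ (P : FGProj A) (Q : FGProj B) (T : FGProj (TensorProduct 𝕜 A B)),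
        (letI : Module 𝕜 P.M := Module.compHom P.M (algebraMap 𝕜 A)
         letI : Module 𝕜 Q.M := Module.compHom Q.M (algebraMap 𝕜 B)
         ∃ u : T.M ≃+ TensorProduct 𝕜 P.M Q.M,
           ∀ (a : A) (b : B) (p : P.M) (q : Q.M),
             u.symm ((a • p) ⊗ₜ[𝕜] (b • q)) = (a ⊗ₜ[𝕜] b) • u.symm (p ⊗ₜ[𝕜] q)) →
        e (K0cls P ⊗ₜ[ℤ] K0cls Q) = K0cls T := by
  have hsim : ∀ (i : Irr A) (j : Irr B), IsSimpleModule (A ⊗[𝕜] B) (TP 𝕜 i.S j.S) :=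
    fun i j => TP.simple i.S j.S (hA i.S inferInstance) (hB j.S inferInstance)
  obtain ⟨e, he⟩ := K0ten_equiv 𝕜 A B hsim
  refine ⟨e.toAddEquiv, fun P Q T h => ?_⟩
  obtain ⟨u, hu⟩ := h
  have h1 : e (K0cls P ⊗ₜ[ℤ] K0cls Q) = K0ten 𝕜 A B (K0cls P ⊗ₜ[ℤ] K0cls Q) :=
    LinearMap.congr_fun he _
  exact (h1.trans (K0ten_cls P Q)).trans (tensor_iso P Q T u hu)

end
end

section
/- Let 𝕜 be a field, let A and B be finite-dimensional ℤ-graded 𝕜-algebras, and let α : A → B be a surjective grading-preserving 𝕜-algebra homomorphism. Then the induced homomorphism K₀(α) : K₀(A) → K₀(B) on Grothendieck groups of finitely generated graded projective modules is surjective. -/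
/-!
`K₀` of a finite-dimensional ℤ-graded algebra over a field 𝕜: the Grothendieck group
of finitely generated graded projective modules (with isomorphism classes taken under
degree-preserving isomorphisms), and the surjectivity of the map on `K₀` induced by a
surjective grading-preserving algebra homomorphism.
-/

noncomputable section

/-- A bundled finitely generated graded projective (left) module over a ℤ-graded
`𝕜`-algebra `A` with grading `𝒜`. -/
structure GrFGProj (𝕜 : Type) [Field 𝕜] (A : Type) [Ring A] [Algebra 𝕜 A]
    (𝒜 : ℤ → Submodule 𝕜 A) : Type 1 where
  M : Type
  [acg : AddCommGroup M]
  [mod : Module A M]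
  grading : ℤ → AddSubgroup M
  internal : DirectSum.IsInternal grading
  smul_mem : ∀ (d e : ℤ) (a : A) (m : M), a ∈ 𝒜 d → m ∈ grading e → a • m ∈ grading (d + e)
  fin : Module.Finite A M
  proj : Module.Projective A M

attribute [instance] GrFGProj.acg GrFGProj.mod

variable (𝕜 : Type) [Field 𝕜] (A : Type) [Ring A] [Algebra 𝕜 A] (𝒜 : ℤ → Submodule 𝕜 A)

/-- Degree-preserving isomorphism of graded modules. -/
def GrIso (P Q : GrFGProj 𝕜 A 𝒜) : Prop :=
  ∃ e : P.M ≃ₗ[A] Q.M, ∀ d : ℤ,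
    (P.grading d).map e.toLinearMap.toAddMonoidHom = Q.grading d

/-- The graded `K₀` of a graded algebra: the free abelian group on isomorphism classes
(under degree-preserving isomorphism) of finitely generated graded projective modules,
modulo the relations `[R] = [P] + [Q]` whenever `R ≅ P ⊕ Q` as graded modules. -/
def K0gr : Type 1 :=
  FreeAbelianGroup (Quot (GrIso 𝕜 A 𝒜)) ⧸
    AddSubgroup.closure {z | ∃ P Q R : GrFGProj 𝕜 A 𝒜,
      (∃ e : R.M ≃ₗ[A] P.M × Q.M, ∀ d : ℤ,
        (R.grading d).map e.toLinearMap.toAddMonoidHom =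
          (P.grading d).prod (Q.grading d)) ∧
      z = FreeAbelianGroup.of (Quot.mk (GrIso 𝕜 A 𝒜) R) -
        FreeAbelianGroup.of (Quot.mk (GrIso 𝕜 A 𝒜) P) -
        FreeAbelianGroup.of (Quot.mk (GrIso 𝕜 A 𝒜) Q)}

instance : AddCommGroup (K0gr 𝕜 A 𝒜) := QuotientAddGroup.Quotient.addCommGroup _

/-- The class `[P] ∈ K₀` of a finitely generated graded projective module `P`. -/
def K0grcls (P : GrFGProj 𝕜 A 𝒜) : K0gr 𝕜 A 𝒜 :=
  QuotientAddGroup.mk (FreeAbelianGroup.of (Quot.mk (GrIso 𝕜 A 𝒜) P))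

section Helpers

structure IsComp18 {M : Type} [AddCommGroup M] {σ : Type} [SetLike σ M]
    (ℳ : ℤ → σ) (c : ℤ → M →+ M) : Prop where
  mem : ∀ d m, c d m ∈ ℳ d
  same : ∀ d m, m ∈ ℳ d → c d m = m
  ne : ∀ d e m, m ∈ ℳ e → e ≠ d → c d m = 0
  fin : ∀ m, ∃ S : Finset ℤ, ∀ T : Finset ℤ, S ⊆ T → ∑ d ∈ T, c d m = m

theorem exists_comp18 {M : Type} [AddCommGroup M] {σ : Type} [SetLike σ M]
    [AddSubmonoidClass σ M] (ℳ : ℤ → σ) (h : DirectSum.IsInternal ℳ) :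
    ∃ c : ℤ → M →+ M, IsComp18 ℳ c := by
  classical
  letI := h.chooseDecomposition
  refine ⟨fun d => 
    { toFun := fun m => (DirectSum.decompose ℳ m d : M)
      map_zero' := by simp
      map_add' := by intro x y; simp }, ?_, ?_, ?_, ?_⟩
  · intro d m
    exact (DirectSum.decompose ℳ m d).2
  · intro d m hm
    exact DirectSum.decompose_of_mem_same ℳ hm
  · intro d e m hm hne
    exact DirectSum.decompose_of_mem_ne ℳ hm hne
  · intro m
    refine ⟨(DirectSum.decompose ℳ m).support, fun T hT => ?_⟩
    conv_rhs => rw [← DirectSum.sum_support_decompose ℳ m]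
    symm
    apply Finset.sum_subset hT
    intro d _ hd
    simpa using hd

theorem internal_of_comp18 {M : Type} [AddCommGroup M] 
    (ℳ : ℤ → AddSubgroup M) (c : ℤ → M →+ M) (h : IsComp18 ℳ c) :
    DirectSum.IsInternal ℳ := by
  classical
  have key : ∀ (x : DirectSum ℤ fun i => ℳ i) d,
      c d (DirectSum.coeAddMonoidHom ℳ x) = x d := by
    intro x d
    induction x using DirectSum.induction_on with
    | zero => simp
    | of i y =>
      rw [DirectSum.coeAddMonoidHom_of]
      by_cases hi : i = d
      · subst hi
        rw [h.same _ _ y.2]; simp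
      · rw [h.ne _ _ _ y.2 hi, DirectSum.of_eq_of_ne _ _ _ (Ne.symm hi)]; simp
    | add x y hx hy => simp [hx, hy]
  constructor
  · intro x y hxy
    ext d
    rw [← key, ← key]
    exact congrArg _ hxy
  · intro m
    obtain ⟨S, hS⟩ := h.fin m
    refine ⟨∑ d ∈ S, DirectSum.of (fun i => ℳ i) d ⟨c d m, h.mem d m⟩, ?_⟩
    rw [map_sum]
    simp only [DirectSum.coeAddMonoidHom_of]
    exact hS S subset_rfl

theorem comp_map18 {M N : Type} [AddCommGroup M] [AddCommGroup N]
    {σ τ : Type} [SetLike σ M] [SetLike τ N]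
    {ℳ : ℤ → σ} {c : ℤ → M →+ M} (hM : IsComp18 ℳ c)
    {𝒩 : ℤ → τ} {c' : ℤ → N →+ N} (hN : IsComp18 𝒩 c')
    (g : M →+ N) (k : ℤ) (hg : ∀ e m, m ∈ ℳ e → g m ∈ 𝒩 (e + k)) (d : ℤ) (m : M) :
    c' (d + k) (g m) = g (c d m) := by
  classical
  obtain ⟨S, hS⟩ := hM.fin m
  have h1 := hS (insert d S) (Finset.subset_insert _ _)
  conv_lhs => rw [← h1]
  rw [map_sum, map_sum, Finset.sum_eq_single d]
  · exact hN.same _ _ (hg _ _ (hM.mem _ _))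
  · intro e _ hne
    exact hN.ne _ _ _ (hg _ _ (hM.mem _ _)) (by omega)
  · intro h; simp at h

theorem lift_idem18 {k S T : Type} [Field k] [Ring S] [Algebra k S] [Ring T] [Algebra k T]
    [FiniteDimensional k S] (φ : S →ₐ[k] T) (N : S) (hN : φ N * φ N = φ N) :
    ∃ e : S, e * e = e ∧ φ e = φ N := by
  have hint : IsIntegral k N := IsIntegral.of_finite k N
  obtain ⟨q, hq, hnd⟩ := Polynomial.exists_eq_pow_rootMultiplicity_mul_and_not_dvd
    (minpoly k N) (minpoly.ne_zero hint) 0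
  generalize Polynomial.rootMultiplicity 0 (minpoly k N) = n at hq
  simp only [map_zero, sub_zero] at hq hnd
  have hcop : IsCoprime ((Polynomial.X : Polynomial k) ^ (n + 1)) q :=
    (Polynomial.irreducible_X.coprime_iff_not_dvd.2 hnd).pow_left
  obtain ⟨u, v, huv⟩ := hcop
  have hz : Polynomial.aeval N (Polynomial.X ^ n * q) = 0 := by
    rw [← hq]; exact minpoly.aeval _ _
  refine ⟨Polynomial.aeval N (u * Polynomial.X ^ (n + 1)), ?_, ?_⟩
  · rw [← map_mul]
    have : u * Polynomial.X ^ (n + 1) * (u * Polynomial.X ^ (n + 1)) =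
        u * Polynomial.X ^ (n + 1) - (u * v * Polynomial.X) * (Polynomial.X ^ n * q) := by
      linear_combination (u * Polynomial.X ^ (n + 1)) * huv
    rw [this, map_sub, map_mul _ _ (Polynomial.X ^ n * q), hz, mul_zero, sub_zero]
  · set b := φ N with hb
    have hpow : ∀ m : ℕ, b ^ m * b = b := by
      intro m
      induction m with
      | zero => simp
      | succ m ih => rw [pow_succ, mul_assoc, hN, ih]
    have hcomm : ∀ p : Polynomial k, Polynomial.aeval b p * b = b * Polynomial.aeval b p := by
      intro p
      have : Polynomial.aeval b (p * Polynomial.X) = Polynomial.aeval b (Polynomial.X * p) := by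
        rw [mul_comm]
      simpa using this
    have hz' : b ^ n * Polynomial.aeval b q = 0 := by
      have := congrArg φ hz
      rw [← Polynomial.aeval_algHom_apply] at this
      simpa using this
    have hqb : Polynomial.aeval b q * b = 0 := by
      rw [hcomm]
      have h2 : b ^ n * Polynomial.aeval b q * b = 0 := by rw [hz', zero_mul]
      rw [mul_assoc, hcomm, ← mul_assoc, hpow] at h2
      exact h2
    have h1 := congrArg (fun p => Polynomial.aeval b p * b) huv
    simp only [map_add, map_mul, map_pow, Polynomial.aeval_X, map_one, one_mul, add_mul] at h1
    rw [mul_assoc _ _ b, mul_assoc _ _ b, hqb, hpow, mul_zero, add_zero] at h1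
    rw [← Polynomial.aeval_algHom_apply]
    simp only [map_mul, map_pow, Polynomial.aeval_X, ← hb]
    rw [pow_succ, hpow, h1]

end Helpers

section Helpers2

def freeGr18 {k R : Type} [Field k] [Ring R] [Algebra k R] (ℛ : ℤ → Submodule k R)
    {ι : Type} (deg : ι → ℤ) (d : ℤ) : AddSubgroup (ι → R) where
  carrier := {x | ∀ i, x i ∈ ℛ (d - deg i)}
  zero_mem' := fun i => (ℛ (d - deg i)).zero_mem
  add_mem' := fun hx hy i => (ℛ (d - deg i)).add_mem (hx i) (hy i)
  neg_mem' := fun hx i => (ℛ (d - deg i)).neg_mem (hx i)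

def freeComp18 {R : Type} [Ring R] (t : ℤ → R →+ R)
    {ι : Type} (deg : ι → ℤ) (d : ℤ) : (ι → R) →+ (ι → R) where
  toFun x i := t (d - deg i) (x i)
  map_zero' := by ext; simp
  map_add' := by intro x y; ext; simp

theorem freeComp_isComp18 {k R : Type} [Field k] [Ring R] [Algebra k R] (ℛ : ℤ → Submodule k R)
    {ι : Type} [Fintype ι] (deg : ι → ℤ) (t : ℤ → R →+ R) (ht : IsComp18 ℛ t) :
    IsComp18 (freeGr18 ℛ deg) (freeComp18 t deg) := by
  classical
  refine ⟨?_, ?_, ?_, ?_⟩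
  · intro d m i
    exact ht.mem _ _
  · intro d m hm
    ext i
    exact ht.same _ _ (hm i)
  · intro d e m hm hne
    ext i
    exact ht.ne _ _ _ (hm i) (by omega)
  · intro m
    choose S hS using fun i => ht.fin (m i)
    refine ⟨Finset.univ.biUnion fun i => (S i).image (· + deg i), fun T hT => ?_⟩
    ext i
    rw [Finset.sum_apply]
    change ∑ d ∈ T, t (d - deg i) (m i) = m i
    rw [← Finset.sum_image (s := T) (g := fun d => d - deg i) (f := fun e => t e (m i))
      (by intro a _ b _ hab; simpa using hab)]
    apply hS
    intro e he
    rw [Finset.mem_image]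
    refine ⟨e + deg i, hT ?_, by simp⟩
    rw [Finset.mem_biUnion]
    exact ⟨i, Finset.mem_univ _, Finset.mem_image_of_mem _ he⟩

/-- graded matrices -/
def grMat18 {k R : Type} [Field k] [Ring R] [Algebra k R] (ℛ : ℤ → Submodule k R)
    (hone : (1 : R) ∈ ℛ 0)
    (hmul : ∀ (d e : ℤ) (x y : R), x ∈ ℛ d → y ∈ ℛ e → x * y ∈ ℛ (d + e))
    {ι : Type} [Fintype ι] [DecidableEq ι] (deg : ι → ℤ) : Subalgebra k (Matrix ι ι R) where
  carrier := {N | ∀ j i, N j i ∈ ℛ (deg j - deg i)}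
  mul_mem' := by
    intro a b ha hb j i
    rw [Matrix.mul_apply]
    refine Submodule.sum_mem _ fun l _ => ?_
    have := hmul _ _ _ _ (ha j l) (hb l i)
    rwa [sub_add_sub_cancel] at this
  add_mem' := fun ha hb j i => Submodule.add_mem _ (ha j i) (hb j i)
  algebraMap_mem' := by
    intro r j i
    rw [Matrix.algebraMap_matrix_apply]
    split_ifs with h
    · subst h
      rw [sub_self, Algebra.algebraMap_eq_smul_one]
      exact Submodule.smul_mem _ _ hone
    · exact Submodule.zero_mem _

theorem vecMul_gr18 {k R : Type} [Field k] [Ring R] [Algebra k R] (ℛ : ℤ → Submodule k R)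
    (hmul : ∀ (d e : ℤ) (x y : R), x ∈ ℛ d → y ∈ ℛ e → x * y ∈ ℛ (d + e))
    {ι : Type} [Fintype ι] (deg : ι → ℤ) (F : Matrix ι ι R)
    (hF : ∀ j i, F j i ∈ ℛ (deg j - deg i)) (d : ℤ) (x : ι → R)
    (hx : x ∈ freeGr18 ℛ deg d) : Matrix.vecMul x F ∈ freeGr18 ℛ deg d := by
  intro i
  refine Submodule.sum_mem _ fun j _ => ?_
  have := hmul _ _ _ _ (hx j) (hF j i)
  rwa [sub_add_sub_cancel] at this

/-- the graded projective module cut out by a graded idempotent matrix -/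
def idemProj18 {k R : Type} [Field k] [Ring R] [Algebra k R] (ℛ : ℤ → Submodule k R)
    (hint : DirectSum.IsInternal ℛ)
    (hmul : ∀ (d e : ℤ) (x y : R), x ∈ ℛ d → y ∈ ℛ e → x * y ∈ ℛ (d + e))
    {ι : Type} [Fintype ι] (deg : ι → ℤ) (F : Matrix ι ι R)
    (hF : ∀ j i, F j i ∈ ℛ (deg j - deg i)) (hFF : F * F = F) : GrFGProj k R ℛ where
  M := LinearMap.range (Matrix.vecMulLinear F)
  grading d := (freeGr18 ℛ deg d).comap
    (LinearMap.range (Matrix.vecMulLinear F)).subtype.toAddMonoidHom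
  internal := by
    obtain ⟨t, ht⟩ := exists_comp18 ℛ hint
    have hc := freeComp_isComp18 ℛ deg t ht
    have hst : ∀ d (x : ι → R), x ∈ LinearMap.range (Matrix.vecMulLinear F) →
        freeComp18 t deg d x ∈ LinearMap.range (Matrix.vecMulLinear F) := by
      rintro d _ ⟨y, rfl⟩
      refine ⟨freeComp18 t deg d y, ?_⟩
      have := comp_map18 hc hc (Matrix.vecMulLinear F).toAddMonoidHom 0 (by
        intro e m hm
        rw [add_zero]
        exact vecMul_gr18 ℛ hmul deg F hF e m hm) d y
      rw [add_zero] at this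
      exact this.symm
    apply internal_of_comp18 _ (fun d =>
      { toFun := fun p => ⟨freeComp18 t deg d p.1, hst d p.1 p.2⟩
        map_zero' := by ext1; exact map_zero _
        map_add' := by intro x y; ext1; exact map_add _ _ _ })
    refine ⟨?_, ?_, ?_, ?_⟩
    · intro d m
      exact hc.mem _ _
    · intro d m hm
      exact Subtype.ext (hc.same _ _ hm)
    · intro d e m hm hne
      exact Subtype.ext (hc.ne _ _ _ hm hne)
    · intro m
      obtain ⟨S, hS⟩ := hc.fin m.1
      refine ⟨S, fun T hT => Subtype.ext ?_⟩
      rw [← hS T hT, AddSubmonoidClass.coe_finsetSum]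
      rfl
  smul_mem := by
    intro d e a m ha hm i
    have := hmul _ _ _ _ ha (hm i)
    rwa [← add_sub_assoc] at this
  fin := inferInstance
  proj := by
    refine Module.Projective.of_split (LinearMap.range (Matrix.vecMulLinear F)).subtype
      (Matrix.vecMulLinear F).rangeRestrict ?_
    ext1 ⟨_, y, rfl⟩
    apply Subtype.ext
    simp [Matrix.vecMul_vecMul, hFF]

theorem main18 {k R B : Type} [Field k] [Ring R] [Algebra k R] (ℛ : ℤ → Submodule k R)
    [Ring B] [Algebra k B] (ℬ : ℤ → Submodule k B)
    [FiniteDimensional k R]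
    (hAint : DirectSum.IsInternal ℛ) (hAone : (1 : R) ∈ ℛ 0)
    (hAmul : ∀ (d e : ℤ) (x y : R), x ∈ ℛ d → y ∈ ℛ e → x * y ∈ ℛ (d + e))
    (hBint : DirectSum.IsInternal ℬ)
    (hBmul : ∀ (d e : ℤ) (x y : B), x ∈ ℬ d → y ∈ ℬ e → x * y ∈ ℬ (d + e))
    (α : R →ₐ[k] B) (hsurj : Function.Surjective α)
    (hgraded : ∀ d : ℤ, (ℛ d).map α.toLinearMap ≤ ℬ d) (Q : GrFGProj k B ℬ) :
    ∃ P : GrFGProj k R ℛ, ∃ g : P.M →ₛₗ[α.toRingHom] Q.M, Function.Surjective g ∧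
        LinearMap.ker g =
          Submodule.span R {m : P.M | ∃ (c : R) (p : P.M), α c = 0 ∧ m = c • p} ∧
        ∀ d : ℤ, (P.grading d).map g.toAddMonoidHom = Q.grading d := by
  classical
  obtain ⟨r, hr⟩ := exists_comp18 ℛ hAint
  obtain ⟨t, ht⟩ := exists_comp18 ℬ hBint
  obtain ⟨c, hc⟩ := exists_comp18 Q.grading Q.internal
  -- lifting homogeneous elements
  have hlift : ∀ d, ∀ b ∈ ℬ d, ∃ a ∈ ℛ d, α a = b := by
    intro d b hb
    obtain ⟨a, rfl⟩ := hsurj b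
    refine ⟨r d a, hr.mem _ _, ?_⟩
    have := comp_map18 hr ht (α : R →+ B) 0 (by
      intro e m hm
      rw [add_zero]
      exact hgraded e ⟨m, hm, rfl⟩) d a
    rw [add_zero] at this
    rw [← ht.same _ _ hb]
    exact this.symm
  -- homogeneous generators
  have hspan : Submodule.span B {m : Q.M | ∃ d, m ∈ Q.grading d} = ⊤ := by
    rw [eq_top_iff]
    rintro m -
    obtain ⟨S, hS⟩ := hc.fin m
    rw [← hS S subset_rfl]
    exact Submodule.sum_mem _ fun d _ => Submodule.subset_span ⟨d, hc.mem _ _⟩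
  have hfg : (Submodule.span B {m : Q.M | ∃ d, m ∈ Q.grading d}).FG := by
    rw [hspan]; exact Q.fin.fg_top
  rw [Submodule.fg_span_iff_fg_span_finset_subset, hspan] at hfg
  obtain ⟨s, hs, hs'⟩ := hfg
  choose deg hdeg using fun i : s => hs i.2
  let q : s → Q.M := fun i => i.1
  let π : (s → B) →ₗ[B] Q.M := Fintype.linearCombination B q
  have hπ : ∀ x, π x = ∑ i, x i • q i := fun x => Fintype.linearCombination_apply B q x
  have hπs : Function.Surjective π := by
    rw [← LinearMap.range_eq_top, Fintype.range_linearCombination, hs']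
    congr 1
    simp [q]
  have hfc := freeComp_isComp18 ℬ deg t ht
  have hπgr : ∀ d x, x ∈ freeGr18 ℬ deg d → π x ∈ Q.grading d := by
    intro d x hx
    rw [hπ]
    refine AddSubgroup.sum_mem _ fun i _ => ?_
    have := Q.smul_mem _ _ _ _ (hx i) (hdeg i)
    rwa [sub_add_cancel] at this
  have hπc : ∀ d x, c d (π x) = π (freeComp18 t deg d x) := by
    intro d x
    have := comp_map18 hfc hc π.toAddMonoidHom 0 (by
      intro e m hm
      rw [add_zero]
      exact hπgr e m hm) d x
    rw [add_zero] at this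
    exact this
  have hproj := Q.proj
  obtain ⟨σ, hσ⟩ := Module.projective_lifting_property π LinearMap.id hπs
  have hσ' : ∀ m, π (σ m) = m := fun m => LinearMap.congr_fun hσ m
  -- graded idempotent over `B`
  let E : Matrix s s B := fun j i => t (deg j - deg i) (σ (q j) i)
  have hE : ∀ j i, E j i ∈ ℬ (deg j - deg i) := fun j i => ht.mem _ _
  have hπE1 : ∀ j, π (E j) = q j := by
    intro j
    have := hπc (deg j) (σ (q j))
    rw [hσ', hc.same _ _ (hdeg j)] at this
    exact this.symm
  have hvec : ∀ x : s → B, Matrix.vecMul x E = ∑ j, x j • E j := by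
    intro x
    rw [Matrix.vecMul_eq_sum]
  have hπE : ∀ x, π (Matrix.vecMul x E) = π x := by
    intro x
    rw [hvec, map_sum, hπ]
    simp only [map_smul, hπE1]
  have hEhom : ∀ d x, x ∈ freeGr18 ℬ deg d →
      Matrix.vecMul x E = freeComp18 t deg d (σ (π x)) := by
    intro d x hx
    rw [hvec, hπ, map_sum, map_sum]
    refine Finset.sum_congr rfl fun j _ => ?_
    rw [map_smul]
    have := comp_map18 hfc hfc (DistribSMul.toAddMonoidHom (s → B) (x j)) (d - deg j) (by
      intro e m hm i
      have := hBmul _ _ _ _ (hx j) (hm i)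
      have h3 : e + (d - deg j) - deg i = d - deg j + (e - deg i) := by ring
      rw [h3]
      exact this) (deg j) (σ (q j))
    rw [add_sub_cancel] at this
    exact this.symm
  have hEker : ∀ x, π x = 0 → Matrix.vecMul x E = 0 := by
    intro x hx
    obtain ⟨S, hS⟩ := hfc.fin x
    rw [← hS S subset_rfl, Matrix.sum_vecMul]
    refine Finset.sum_eq_zero fun d _ => ?_
    rw [hEhom d _ (hfc.mem _ _), ← hπc, hx]
    simp
  have hEE : E * E = E := by
    ext j i
    have h0 := hEker (E j - Pi.single j 1) (by
      rw [map_sub, hπE1, hπ]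
      simp [Pi.single_apply])
    rw [Matrix.sub_vecMul, sub_eq_zero, Matrix.single_one_vecMul] at h0
    exact congrFun h0 i
  -- lift
  choose N hN hNE using fun j i => hlift _ _ (hE j i)
  let φ : grMat18 ℛ hAone hAmul deg →ₐ[k] Matrix s s B :=
    (α.mapMatrix).comp (grMat18 ℛ hAone hAmul deg).val
  have hφN : φ ⟨Matrix.of N, hN⟩ = E := by
    ext j i
    exact hNE j i
  obtain ⟨⟨F, hF⟩, hFF, hFE⟩ := lift_idem18 φ ⟨Matrix.of N, hN⟩ (by rw [hφN, hEE])
  rw [hφN] at hFE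
  have hFF' : F * F = F := congrArg Subtype.val hFF
  have hFE' : F.map α = E := hFE
  have hαF : ∀ x : s → R, α ∘ (Matrix.vecMul x F) = Matrix.vecMul (α ∘ x) E := by
    intro x
    rw [← hFE']
    ext i
    simp [Matrix.vecMul, dotProduct]
  let P := idemProj18 ℛ hAint hAmul deg F hF hFF'
  let g : LinearMap.range (Matrix.vecMulLinear F) →ₛₗ[α.toRingHom] Q.M :=
    { toFun := fun p => π (α ∘ p.1)
      map_add' := by
        intro x y
        rw [← map_add]
        congr 1
        ext i
        simp
      map_smul' := by
        intro a x
        rw [← map_smul]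
        congr 1
        ext i
        simp }
  have hgv : ∀ x : s → R, ∀ h, g ⟨Matrix.vecMul x F, h⟩ = π (α ∘ x) := by
    intro x h
    change π (α ∘ (Matrix.vecMul x F)) = _
    rw [hαF, hπE]
  refine ⟨P, g, ?_, ?_, ?_⟩
  · intro m
    obtain ⟨y, rfl⟩ := hπs m
    choose x hx using fun i => hsurj (y i)
    refine ⟨⟨Matrix.vecMul x F, x, rfl⟩, ?_⟩
    refine (hgv x _).trans ?_
    congr 1
    ext i; exact hx i
  · apply le_antisymm
    · intro p hp
      obtain ⟨x, hx⟩ := p.2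
      have hpF : Matrix.vecMul p.1 F = p.1 := by
        rw [← hx]
        simp [Matrix.vecMul_vecMul, hFF']
      have h1 : Matrix.vecMul (α ∘ p.1) E = 0 := hEker _ hp
      rw [← hαF, hpF] at h1
      have h2 : p = ∑ j, p.1 j • (⟨F j, Pi.single j 1, by simp [Matrix.single_one_vecMul]; rfl⟩ :
          LinearMap.range (Matrix.vecMulLinear F)) := by
        apply Subtype.ext
        rw [AddSubmonoidClass.coe_finsetSum]
        conv_lhs => rw [← hpF, Matrix.vecMul_eq_sum]
        rfl
      rw [h2]
      exact Submodule.sum_mem _ fun j _ => Submodule.subset_span ⟨_, _, congrFun h1 j, rfl⟩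
    · rw [Submodule.span_le]
      rintro _ ⟨a, p, ha, rfl⟩
      refine (g.map_smulₛₗ a p).trans ?_
      change α a • g p = 0
      rw [ha, zero_smul]
  · intro d
    apply le_antisymm
    · rintro _ ⟨p, hp, rfl⟩
      exact hπgr d _ fun i => hgraded _ ⟨_, hp i, rfl⟩
    · intro m hm
      obtain ⟨y, rfl⟩ := hπs m
      choose x hx hxy using fun i => hlift (d - deg i) (t (d - deg i) (y i)) (ht.mem _ _)
      refine ⟨⟨Matrix.vecMul x F, x, rfl⟩, vecMul_gr18 ℛ hAmul deg F hF d x hx, ?_⟩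
      refine (hgv x _).trans ?_
      rw [← hc.same _ _ hm, hπc]
      congr 1
      ext i; exact hxy i

end Helpers2

-- STATEMENT 18
theorem stmt18 (B : Type) [Ring B] [Algebra 𝕜 B] (ℬ : ℤ → Submodule 𝕜 B)
    [FiniteDimensional 𝕜 A] [FiniteDimensional 𝕜 B]
    (hAint : DirectSum.IsInternal 𝒜) (hAone : (1 : A) ∈ 𝒜 0)
    (hAmul : ∀ (d e : ℤ) (x y : A), x ∈ 𝒜 d → y ∈ 𝒜 e → x * y ∈ 𝒜 (d + e))
    (hBint : DirectSum.IsInternal ℬ) (hBone : (1 : B) ∈ ℬ 0)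
    (hBmul : ∀ (d e : ℤ) (x y : B), x ∈ ℬ d → y ∈ ℬ e → x * y ∈ ℬ (d + e))
    (α : A →ₐ[𝕜] B) (hsurj : Function.Surjective α)
    (hgraded : ∀ d : ℤ, (𝒜 d).map α.toLinearMap ≤ ℬ d)
    -- `f` is the homomorphism `K₀(α)` induced by `α`, i.e. it sends the class of a
    -- finitely generated graded projective `A`-module `P` to the class of the base
    -- change `B ⊗_A P`, characterized as any graded `B`-module `Q` admitting an
    -- `α`-semilinear surjection `P → Q` with kernel `(ker α)·P` mapping the grading
    -- of `P` onto that of `Q`.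
    (f : K0gr 𝕜 A 𝒜 →+ K0gr 𝕜 B ℬ)
    (hf : ∀ (P : GrFGProj 𝕜 A 𝒜) (Q : GrFGProj 𝕜 B ℬ),
      (∃ g : P.M →ₛₗ[α.toRingHom] Q.M, Function.Surjective g ∧
        LinearMap.ker g =
          Submodule.span A {m : P.M | ∃ (c : A) (p : P.M), α c = 0 ∧ m = c • p} ∧
        ∀ d : ℤ, (P.grading d).map g.toAddMonoidHom = Q.grading d) →
      f (K0grcls 𝕜 A 𝒜 P) = K0grcls 𝕜 B ℬ Q) :
    Function.Surjective f := by
  have key : ∀ Q : GrFGProj 𝕜 B ℬ, K0grcls 𝕜 B ℬ Q ∈ f.range := by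
    intro Q
    obtain ⟨P, hP⟩ := main18 𝒜 ℬ hAint hAone hAmul hBint hBmul α hsurj hgraded Q
    exact ⟨K0grcls 𝕜 A 𝒜 P, hf P Q hP⟩
  intro z
  change z ∈ f.range
  obtain ⟨y, rfl⟩ := QuotientAddGroup.mk_surjective z
  induction y using FreeAbelianGroup.induction_on with
  | zero => exact f.range.zero_mem
  | of x =>
    obtain ⟨Q, rfl⟩ := Quot.exists_rep x
    exact key Q
  | neg x hx => exact f.range.neg_mem hx
  | add x y hx hy => exact f.range.add_mem hx hy

end
end
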